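/- arXiv:1211.1058 — 2 statements merged into one kernel-verified Lean document; each statement's English description precedes it below -/
import Mathlib

section
/- For every dimension s ≥ 1, every N ≥ 1 and every q ∈ (0,1), the probability that a random point set (z_1, …, z_N) of N i.i.d. uniform points in [0,1]^s satisfies D*_N(z_1, …, z_N) ≤ 5.7 · √(4.9 + log((1−q)^{−1})) · √s/√N is at least q. -/
/-!
The proof is a dyadic chaining argument with brackets.

Write `L = log (1 - q)⁻¹` and `R = √(4.9 + L) · √(s / N)`, so that `N R² = s (4.9 + L)`; the claim
is that the star-discrepancy is at most `5.7 R` outside an event of probability `exp (-L)`.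
If `5.7 R ≥ 1` this is trivial.

*Brackets* (`exists_brackets`). The points of `(0,1]^s` whose coordinates are powers of
`g = exp (-ε / s)` give lower and upper brackets `lo ⊆ [0,x] ⊆ up` with `λ (up \ lo) ≤ ε`. Only
exponent vectors of coordinate sum at most `s m` are needed, where `exp (-ε m) ≤ ε`: a box of
smaller volume is bracketed from below by the empty set. There are at most `(e (m + 1))^s` such
vectors (`card_simplex_le`).

*Tails* (`dev_tail`). For a set `A` with `λ(A) (1 - λ(A)) ≤ v` the empirical measure of `A` deviates
from `λ(A)` by more than `t ≤ 2 v` with probability at most `2 exp (-N t² / (4 v))`.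

*Chaining* (`chain_event`, `discrepancy_event`). At level `i` take brackets of width
`4 ^ (-(i + 1))`. The lower bracket of level `i + 1` is itself a box or empty, so it contains a lower
bracket of level `i`, and the difference of the two has measure at most `4 ^ (-(i + 1))`. By the tail
bound and a union bound, all differences at level `i` deviate by at most `lvlTau i * R`, except with
probability `2 ^ (-(i + 1)) exp (-L)` (`lvl_prob`). The numbers `lvlTau i` sum to at most `3.82`, and
the chain is stopped at the first level whose bracket width is at most `1.88 R`. The total is
`3.82 R + 1.88 R = 5.7 R`.
-/

open MeasureTheory Real

/-- The star-discrepancy of the point set `z 0, …, z (N-1)` in `[0,1]^s`. -/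
noncomputable def starDiscrepancy (s N : ℕ) (z : Fin N → (Fin s → ℝ)) : ℝ :=
  ⨆ x : (Set.Icc (0 : Fin s → ℝ) 1),
    |(Nat.card {n : Fin N // z n ∈ Set.Icc 0 (x : Fin s → ℝ)} : ℝ) / N
      - ∏ i, (x : Fin s → ℝ) i|

/-! ### Deviation of the empirical measure -/


/-- Upper tail for a sum of i.i.d. centred variables bounded by `1` with variance at most `v`. The
Chernoff parameter is `l = t / (2 v) ≤ 1`, and `exp x ≤ 1 + x + x²` for `|x| ≤ 1` bounds the moment
generating function by `exp (l² v)`. -/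
lemma chernoff_sum {Ω : Type*} [MeasurableSpace Ω] (μ : Measure Ω) [IsProbabilityMeasure μ]
    (N : ℕ) (f : Ω → ℝ) (hf : Measurable f) (hb : ∀ ω, |f ω| ≤ 1) (h0 : ∫ ω, f ω ∂μ = 0)
    {v t : ℝ} (hv : 0 < v) (hvar : ∫ ω, f ω ^ 2 ∂μ ≤ v) (ht : 0 ≤ t) (htv : t ≤ 2 * v) :
    (Measure.pi fun _ : Fin N => μ).real {z | N * t ≤ ∑ n, f (z n)}
      ≤ exp (-(N * t ^ 2 / (4 * v))) := by
  set l : ℝ := t / (2 * v) with hl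
  have hl0 : 0 ≤ l := by positivity
  have hl1 : l ≤ 1 := by rw [hl, div_le_one (by positivity)]; exact htv
  have hlf : ∀ ω, |l * f ω| ≤ 1 := fun ω => by
    rw [abs_mul, abs_of_nonneg hl0]
    exact mul_le_one₀ hl1 (abs_nonneg _) (hb ω)
  have hif : Integrable f μ :=
    Integrable.of_bound hf.aestronglyMeasurable 1 (ae_of_all _ hb)
  have hif2 : Integrable (fun ω => f ω ^ 2) μ :=
    Integrable.of_bound (hf.pow_const 2).aestronglyMeasurable 1 (ae_of_all _ fun ω => by
      rw [norm_pow, Real.norm_eq_abs]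
      exact pow_le_one₀ (abs_nonneg _) (hb ω))
  have hie : Integrable (fun ω => exp (l * f ω)) μ :=
    Integrable.of_bound (by fun_prop) (exp 1) (ae_of_all _ fun ω => by
      rw [Real.norm_eq_abs, abs_of_pos (exp_pos _)]
      exact exp_le_exp.2 (le_of_abs_le (hlf ω)))
  have hlin : Integrable (fun ω => 1 + l * f ω) μ := (integrable_const _).add (hif.const_mul _)
  have hmgf : ∫ ω, exp (l * f ω) ∂μ ≤ exp (l ^ 2 * v) := by
    calc ∫ ω, exp (l * f ω) ∂μ ≤ ∫ ω, (1 + l * f ω + l ^ 2 * f ω ^ 2) ∂μ := by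
          refine integral_mono hie
            (hlin.add (hif2.const_mul _)) fun ω => ?_
          have := le_of_abs_le (Real.abs_exp_sub_one_sub_id_le (hlf ω))
          simp only
          nlinarith
      _ = 1 + l ^ 2 * ∫ ω, f ω ^ 2 ∂μ := by
          rw [integral_add hlin (hif2.const_mul _),
            integral_add (integrable_const _) (hif.const_mul _), integral_const_mul,
            integral_const_mul, h0]
          simp
      _ ≤ 1 + l ^ 2 * v := by gcongr
      _ ≤ exp (l ^ 2 * v) := by linarith [add_one_le_exp (l ^ 2 * v)]
  have hprod : ∀ z : Fin N → Ω, exp (l * ∑ n, f (z n)) = ∏ n, exp (l * f (z n)) := fun z => by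
    rw [Finset.mul_sum, exp_sum]
  have hint : Integrable (fun z : Fin N → Ω => exp (l * ∑ n, f (z n)))
      (Measure.pi fun _ : Fin N => μ) := by
    simp only [hprod]
    exact Integrable.fintype_prod (f := fun _ ω => exp (l * f ω)) fun _ => hie
  refine (ProbabilityTheory.measure_ge_le_exp_mul_mgf (N * t) hl0 hint).trans ?_
  rw [ProbabilityTheory.mgf]
  simp only [hprod]
  rw [integral_fintype_prod_eq_pow (fun ω => exp (l * f ω)), Fintype.card_fin]
  calc exp (-l * (N * t)) * (∫ ω, exp (l * f ω) ∂μ) ^ N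
      ≤ exp (-l * (N * t)) * exp (l ^ 2 * v) ^ N := by
        gcongr
    _ = exp (-(N * t ^ 2 / (4 * v))) := by
        rw [← exp_nat_mul, ← exp_add, hl]
        congr 1
        field_simp
        ring

/-- The deviation of the empirical measure of the points `z 0, …, z (N-1)` from `μ` on the set `A`. -/
noncomputable def dev {Ω : Type*} [MeasurableSpace Ω] (μ : Measure Ω) {N : ℕ} (A : Set Ω)
    (z : Fin N → Ω) : ℝ :=
  (∑ n, A.indicator 1 (z n)) / N - μ.real A

lemma dev_tail {Ω : Type*} [MeasurableSpace Ω] (μ : Measure Ω) [IsProbabilityMeasure μ]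
    (N : ℕ) (hN : 1 ≤ N) (A : Set Ω) (hA : MeasurableSet A)
    {v t : ℝ} (hv : 0 < v) (hvar : μ.real A * (1 - μ.real A) ≤ v) (ht : 0 ≤ t) (htv : t ≤ 2 * v) :
    (Measure.pi fun _ : Fin N => μ).real {z | t < |dev μ A z|}
      ≤ 2 * exp (-(N * t ^ 2 / (4 * v))) := by
  set p := μ.real A with hp
  have hp0 : 0 ≤ p := measureReal_nonneg
  have hp1 : p ≤ 1 := measureReal_le_one
  set f : Ω → ℝ := fun ω => A.indicator 1 ω - p with hf
  have hm1 : Measurable (A.indicator (1 : Ω → ℝ)) := measurable_one.indicator hA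
  have hm : Measurable f := hm1.sub_const _
  have hi1 : Integrable (A.indicator (1 : Ω → ℝ)) μ :=
    (integrable_indicator_iff hA).2 (integrable_const (1 : ℝ)).integrableOn
  have hb : ∀ ω, |f ω| ≤ 1 := fun ω => by
    by_cases h : ω ∈ A <;> simp only [hf, h, Set.indicator_of_mem, Set.indicator_of_notMem,
      not_false_eq_true, Pi.one_apply] <;> rw [abs_le] <;> constructor <;> linarith
  have h0 : ∫ ω, f ω ∂μ = 0 := by
    rw [hf, integral_sub hi1 (integrable_const _), integral_indicator_one hA]
    simp [hp]
  have h2 : ∫ ω, f ω ^ 2 ∂μ ≤ v := by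
    have : ∀ ω, f ω ^ 2 = (1 - 2 * p) * A.indicator (1 : Ω → ℝ) ω + p ^ 2 := fun ω => by
      by_cases h : ω ∈ A <;> simp [hf, h]; ring
    simp only [this]
    rw [integral_add (hi1.const_mul _) (integrable_const _), integral_const_mul,
      integral_indicator_one hA]
    simp only [integral_const, probReal_univ, one_smul]
    linarith
  have hN' : (0 : ℝ) < N := by exact_mod_cast hN
  have hsum : ∀ z : Fin N → Ω, ∑ n, f (z n) = N * dev μ A z := fun z => by
    simp only [hf, dev, Finset.sum_sub_distrib]
    simp only [Finset.sum_const, Finset.card_univ, Fintype.card_fin, nsmul_eq_mul]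
    field_simp
    simp [hp]
  have k1 := chernoff_sum μ N f hm hb h0 hv h2 ht htv
  have k2 := chernoff_sum μ N (fun ω => - f ω) hm.neg (by simpa using hb)
    (by rw [integral_neg, h0, neg_zero]) hv (by simpa using h2) ht htv
  have hsub : {z : Fin N → Ω | t < |dev μ A z|} ⊆
      {z | N * t ≤ ∑ n, f (z n)} ∪ {z | N * t ≤ ∑ n, - f (z n)} := by
    intro z hz
    simp only [Set.mem_ofPred_eq, Set.mem_union, Finset.sum_neg_distrib, hsum] at hz ⊢
    rw [← mul_neg, mul_le_mul_iff_right₀ hN', mul_le_mul_iff_right₀ hN']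
    rcases lt_abs.1 hz with h | h
    · exact Or.inl h.le
    · exact Or.inr h.le
  calc _ ≤ _ := measureReal_mono hsub
    _ ≤ _ := measureReal_union_le _ _
    _ ≤ _ := by linarith

lemma dev_add {Ω : Type*} [MeasurableSpace Ω] (μ : Measure Ω) [IsProbabilityMeasure μ]
    {N : ℕ} {A L : Set Ω} (hL : MeasurableSet L) (h : L ⊆ A) (z : Fin N → Ω) :
    dev μ A z = dev μ L z + dev μ (A \ L) z := by
  have h1 : ∀ n, A.indicator (1 : Ω → ℝ) (z n)
      = L.indicator 1 (z n) + (A \ L).indicator 1 (z n) := fun n => by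
    have := @h (z n)
    by_cases h1 : z n ∈ A <;> by_cases h2 : z n ∈ L <;> simp [h1, h2]
    exact (h1 (this h2))
  have h2 : μ.real (A \ L) = μ.real A - μ.real L := measureReal_sdiff h hL
  simp only [dev, h1, Finset.sum_add_distrib, h2]
  ring

lemma dev_le_of_subset {Ω : Type*} [MeasurableSpace Ω] (μ : Measure Ω) [IsProbabilityMeasure μ]
    {N : ℕ} {A U : Set Ω} (h : A ⊆ U) (z : Fin N → Ω) :
    dev μ A z ≤ dev μ U z + (μ.real U - μ.real A) := by
  have h1 : ∀ n, A.indicator (1 : Ω → ℝ) (z n) ≤ U.indicator 1 (z n) := fun n =>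
    Set.indicator_le_indicator_of_subset h (fun _ => zero_le_one) _
  have : (∑ n, A.indicator (1 : Ω → ℝ) (z n)) / N ≤ (∑ n, U.indicator (1 : Ω → ℝ) (z n)) / N :=
    div_le_div_of_nonneg_right (Finset.sum_le_sum fun n _ => h1 n) (Nat.cast_nonneg N)
  simp only [dev]
  linarith

/-- Union bound: off an event of probability at most `η`, every set of a finite family deviates by at
most `t`. -/
lemma exists_event {Ω : Type*} [MeasurableSpace Ω] (μ : Measure Ω) [IsProbabilityMeasure μ]
    (N : ℕ) (hN : 1 ≤ N) {ι : Type*} (B : Finset ι) (A : ι → Set Ω)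
    (hA : ∀ b ∈ B, MeasurableSet (A b)) {v t η : ℝ} (hv : 0 < v)
    (hvar : ∀ b ∈ B, μ.real (A b) * (1 - μ.real (A b)) ≤ v) (ht : 0 ≤ t) (htv : t ≤ 2 * v)
    (hη : B.card * (2 * exp (-(N * t ^ 2 / (4 * v)))) ≤ η) :
    ∃ E : Set (Fin N → Ω), (Measure.pi fun _ : Fin N => μ).real E ≤ η ∧
      ∀ z ∉ E, ∀ b ∈ B, |dev μ (A b) z| ≤ t := by
  refine ⟨⋃ b ∈ B, {z | t < |dev μ (A b) z|}, ?_, ?_⟩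
  · refine (measureReal_biUnion_finset_le _ _).trans ?_
    refine (Finset.sum_le_card_nsmul _ _ _ fun b hb =>
      dev_tail μ N hN (A b) (hA b hb) hv (hvar b hb) ht htv).trans ?_
    rwa [nsmul_eq_mul]
  · intro z hz b hb
    simp only [Set.mem_iUnion, Set.mem_ofPred_eq, not_exists, not_lt] at hz
    exact hz b hb

/-! ### Brackets for anchored boxes -/


/-- Number of lattice points in a simplex. Each `k` with `∑ k i ≤ s m` has `∏ l ^ k i ≥ l ^ (s m)`,
and the sum of these products over all `k` is at most `(1 - l)^(-s)`; the choice `l = m / (m + 1)` is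
optimal. -/
lemma card_simplex_le (s m : ℕ) (hm : 1 ≤ m) :
    (((Fintype.piFinset fun _ : Fin s => Finset.range (s * m + 1)).filter
      fun k => ∑ i, k i ≤ s * m).card : ℝ) ≤ (exp 1 * (m + 1)) ^ s := by
  have hm' : (0 : ℝ) < m := by exact_mod_cast hm
  set l : ℝ := m / (m + 1) with hl
  have hl0 : 0 < l := by positivity
  have hl1 : l < 1 := by rw [hl, div_lt_one (by positivity)]; linarith
  have hgeo : ∑ j ∈ Finset.range (s * m + 1), l ^ j ≤ m + 1 := by
    have h1 : (1 - l) = 1 / (m + 1) := by rw [hl]; field_simp; ring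
    have h2 := geom_sum_mul_neg l (s * m + 1)
    rw [h1] at h2
    have h3 : 0 ≤ l ^ (s * m + 1) := by positivity
    have h4 : (∑ j ∈ Finset.range (s * m + 1), l ^ j) = (1 - l ^ (s * m + 1)) * (m + 1) := by
      rw [← h2]; field_simp
    rw [h4]
    nlinarith
  have hlinv : (l⁻¹) ^ m ≤ exp 1 := by
    have : l⁻¹ ≤ exp (1 / m) := by
      have := add_one_le_exp (1 / (m : ℝ))
      refine le_trans (le_of_eq ?_) this
      rw [hl]; field_simp; ring
    calc (l⁻¹) ^ m ≤ exp (1 / m) ^ m := by gcongr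
      _ = exp 1 := by rw [← exp_nat_mul]; congr 1; field_simp
  have hcount : (((Fintype.piFinset fun _ : Fin s => Finset.range (s * m + 1)).filter
      fun k => ∑ i, k i ≤ s * m).card : ℝ) * l ^ (s * m) ≤ (m + 1) ^ s := by
    calc _ = ∑ k ∈ (Fintype.piFinset fun _ : Fin s => Finset.range (s * m + 1)).filter
            (fun k => ∑ i, k i ≤ s * m), l ^ (s * m) := by simp
      _ ≤ ∑ k ∈ (Fintype.piFinset fun _ : Fin s => Finset.range (s * m + 1)).filter
            (fun k => ∑ i, k i ≤ s * m), ∏ i, l ^ (k i) := by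
          refine Finset.sum_le_sum fun k hk => ?_
          rw [Finset.prod_pow_eq_pow_sum]
          exact pow_le_pow_of_le_one hl0.le hl1.le (Finset.mem_filter.1 hk).2
      _ ≤ ∑ k ∈ (Fintype.piFinset fun _ : Fin s => Finset.range (s * m + 1)), ∏ i, l ^ (k i) :=
          Finset.sum_le_sum_of_subset_of_nonneg (Finset.filter_subset _ _)
            fun _ _ _ => Finset.prod_nonneg fun _ _ => by positivity
      _ = (∑ j ∈ Finset.range (s * m + 1), l ^ j) ^ s := by
          rw [← Finset.prod_univ_sum (fun _ : Fin s => Finset.range (s * m + 1))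
            (fun _ j => l ^ j)]
          simp
      _ ≤ (m + 1) ^ s := by
          gcongr
  calc _ = _ * l ^ (s * m) * ((l⁻¹) ^ m) ^ s := by
        rw [← pow_mul, mul_comm m s, mul_assoc, ← mul_pow, mul_inv_cancel₀ hl0.ne', one_pow, mul_one]
    _ ≤ (m + 1) ^ s * (exp 1) ^ s := by gcongr
    _ = _ := by rw [← mul_pow, mul_comm]

/-- The uniform distribution on `[0,1]^s`, as a measure on `ℝ^s`. -/
noncomputable abbrev cubeMeasure (s : ℕ) : Measure (Fin s → ℝ) :=
  Measure.pi fun _ : Fin s => volume.restrict (Set.Icc (0:ℝ) 1)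

instance : IsProbabilityMeasure ((volume : Measure ℝ).restrict (Set.Icc (0:ℝ) 1)) :=
  ⟨by simp⟩

lemma cubeMeasure_box (s : ℕ) (x : Fin s → ℝ) (h0 : 0 ≤ x) (h1 : x ≤ 1) :
    (cubeMeasure s).real (Set.Icc 0 x) = ∏ i, x i := by
  rw [Measure.real, ← Set.pi_univ_Icc, Measure.pi_pi, ENNReal.toReal_prod]
  refine Finset.prod_congr rfl fun i _ => ?_
  have h : Set.Icc (0 : ℝ) (x i) ∩ Set.Icc 0 1 = Set.Icc 0 (x i) :=
    Set.inter_eq_self_of_subset_left (Set.Icc_subset_Icc le_rfl (h1 i))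
  rw [Measure.restrict_apply measurableSet_Icc, Pi.zero_apply, h, Real.volume_Icc]
  simpa using h0 i

/-- The class of sets used in the chaining: anchored boxes `[0,x]` with `x ∈ [0,1]^s`, and the empty
set, which serves as lower bracket of the boxes of small volume. -/
def BoxOrEmpty (s : ℕ) (A : Set (Fin s → ℝ)) : Prop :=
  A = ∅ ∨ ∃ x, 0 ≤ x ∧ x ≤ 1 ∧ A = Set.Icc 0 x

lemma BoxOrEmpty.measurableSet {s : ℕ} {A : Set (Fin s → ℝ)} (h : BoxOrEmpty s A) :
    MeasurableSet A := by
  rcases h with rfl | ⟨x, -, -, rfl⟩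
  · exact MeasurableSet.empty
  · exact measurableSet_Icc

lemma exists_le_sum_eq {s : ℕ} (k : Fin s → ℕ) (M : ℕ) (h : M ≤ ∑ i, k i) :
    ∃ k' ≤ k, ∑ i, k' i = M := by
  obtain ⟨g, hg, hd⟩ := Finsupp.exists_le_degree_eq (Finsupp.equivFunOnFinite.symm k) M
    (by simpa [Finsupp.degree_eq_sum] using h)
  exact ⟨g, fun i => hg i, by simpa [Finsupp.degree_eq_sum] using hd⟩

/-- A finite family `B` of pairs (lower bracket, upper bracket) of width at most `ε` such that every
box lies between the two members of some pair. -/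
lemma exists_brackets (s m : ℕ) (hs : 1 ≤ s) (hm : 1 ≤ m) (ε : ℝ) (hε : 0 < ε)
    (hεm : exp (-(ε * m)) ≤ ε) :
    ∃ B : Finset (Set (Fin s → ℝ) × Set (Fin s → ℝ)),
      (B.card : ℝ) ≤ (exp 1 * (m + 1)) ^ s ∧
      (∀ b ∈ B, BoxOrEmpty s b.1 ∧ MeasurableSet b.2 ∧ b.1 ⊆ b.2 ∧
        (cubeMeasure s).real (b.2 \ b.1) ≤ ε) ∧
      ∀ A, BoxOrEmpty s A → ∃ b ∈ B, b.1 ⊆ A ∧ A ⊆ b.2 := by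
  classical
  have hs' : (0 : ℝ) < s := by exact_mod_cast hs
  set g : ℝ := exp (-(ε / s)) with hg
  have hg0 : 0 < g := exp_pos _
  have hg1 : g < 1 := by rw [hg, exp_lt_one_iff]; have : 0 < ε / s := by positivity
                         linarith
  have hgs : g ^ s = exp (-ε) := by rw [hg, ← exp_nat_mul]; congr 1; field_simp
  have hgM : g ^ (s * m) ≤ ε := by
    rw [pow_mul, hgs, ← exp_nat_mul]
    convert hεm using 2
    ring
  -- The grid point with exponent vector `k`.
  set pt : (Fin s → ℕ) → (Fin s → ℝ) := fun k i => g ^ (k i) with hpt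
  have pt0 : ∀ k, 0 ≤ pt k := fun k i => by simp only [hpt, Pi.zero_apply]; positivity
  have pt1 : ∀ k, pt k ≤ 1 := fun k i => pow_le_one₀ hg0.le hg1.le
  have ptp : ∀ k, ∏ i, pt k i = g ^ (∑ i, k i) := fun k => by
    simp only [hpt, Finset.prod_pow_eq_pow_sum]
  -- The lower bracket attached to the upper bracket `[0, pt k]`.
  set lo : (Fin s → ℕ) → Set (Fin s → ℝ) := fun k =>
    if ∑ i, k i < s * m then Set.Icc 0 (pt (k + 1)) else ∅ with hlo
  have lo_sub : ∀ k, lo k ⊆ Set.Icc 0 (pt k) := fun k => by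
    simp only [hlo]
    split_ifs
    · exact Set.Icc_subset_Icc le_rfl fun i => pow_le_pow_of_le_one hg0.le hg1.le (Nat.le_succ _)
    · exact Set.empty_subset _
  have lo_box : ∀ k, BoxOrEmpty s (lo k) := fun k => by
    simp only [hlo]
    split_ifs
    · exact Or.inr ⟨_, pt0 _, pt1 _, rfl⟩
    · exact Or.inl rfl
  set I := (Fintype.piFinset fun _ : Fin s => Finset.range (s * m + 1)).filter
      fun k => ∑ i, k i ≤ s * m with hI
  have memI : ∀ k : Fin s → ℕ, ∑ i, k i ≤ s * m → k ∈ I := fun k hk => by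
    simp only [hI, Finset.mem_filter, Fintype.mem_piFinset, Finset.mem_range]
    refine ⟨fun i => Nat.lt_succ_of_le (le_trans ?_ hk), hk⟩
    exact Finset.single_le_sum (f := k) (fun _ _ => Nat.zero_le _) (Finset.mem_univ i)
  refine ⟨I.image fun k => (lo k, Set.Icc 0 (pt k)), ?_, ?_, ?_⟩
  · exact le_trans (by exact_mod_cast Finset.card_image_le) (card_simplex_le s m hm)
  · intro b hb
    obtain ⟨k, hk, rfl⟩ := Finset.mem_image.1 hb
    refine ⟨lo_box k, measurableSet_Icc, lo_sub k, ?_⟩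
    have hk' : ∑ i, k i ≤ s * m := (Finset.mem_filter.1 hk).2
    simp only
    rw [measureReal_sdiff (lo_sub k) (lo_box k).measurableSet,
      cubeMeasure_box s _ (pt0 k) (pt1 k), ptp]
    by_cases h : ∑ i, k i < s * m
    · have : lo k = Set.Icc 0 (pt (k + 1)) := by simp only [hlo, h, if_true]
      rw [this, cubeMeasure_box s _ (pt0 _) (pt1 _), ptp]
      simp only [Pi.add_apply, Pi.one_apply, Finset.sum_add_distrib, Finset.sum_const,
        Finset.card_univ, Fintype.card_fin, smul_eq_mul, mul_one]
      rw [pow_add, hgs]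
      have h1 : g ^ (∑ i, k i) ≤ 1 := pow_le_one₀ hg0.le hg1.le
      have h2 : 0 ≤ g ^ (∑ i, k i) := by positivity
      have h3 := add_one_le_exp (-ε)
      nlinarith
    · have : lo k = ∅ := by simp only [hlo, h, if_false]
      rw [this, show ∑ i, k i = s * m by omega]
      simpa using hgM
  · intro A hA
    rcases hA with rfl | ⟨x, hx0, hx1, rfl⟩
    · obtain ⟨k, -, hk⟩ := exists_le_sum_eq (fun _ : Fin s => m) (s * m) (by simp)
      refine ⟨(lo k, Set.Icc 0 (pt k)), Finset.mem_image_of_mem _ (memI k hk.le), ?_,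
        Set.empty_subset _⟩
      simp [hlo, hk]
    · -- Capping the exponent at `s * m` keeps it finite when `x i = 0`.
      set k : Fin s → ℕ := fun i => Nat.findGreatest (fun j => x i ≤ g ^ j) (s * m) with hk
      have hxk : ∀ i, x i ≤ g ^ (k i) := fun i =>
        Nat.findGreatest_spec (P := fun j => x i ≤ g ^ j) (Nat.zero_le _) (by simpa using hx1 i)
      by_cases h : ∑ i, k i < s * m
      · refine ⟨(lo k, Set.Icc 0 (pt k)), Finset.mem_image_of_mem _ (memI k h.le), ?_, ?_⟩
        · simp only [hlo, h, if_true]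
          refine Set.Icc_subset_Icc le_rfl fun i => ?_
          have hki : k i < s * m := lt_of_le_of_lt
            (Finset.single_le_sum (f := k) (fun _ _ => Nat.zero_le _) (Finset.mem_univ i)) h
          have := Nat.findGreatest_is_greatest (P := fun j => x i ≤ g ^ j)
            (n := s * m) (k := k i + 1) (Nat.lt_succ_self _) hki
          exact (not_le.1 this).le
        · exact Set.Icc_subset_Icc le_rfl hxk
      · -- The volume is small: shrink the exponents to sum exactly `s * m`, lower bracket empty.
        obtain ⟨k', hk', hsum⟩ := exists_le_sum_eq k (s * m) (not_lt.1 h)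
        refine ⟨(lo k', Set.Icc 0 (pt k')), Finset.mem_image_of_mem _ (memI k' hsum.le), ?_, ?_⟩
        · simp [hlo, hsum]
        · exact Set.Icc_subset_Icc le_rfl fun i =>
            (hxk i).trans (pow_le_pow_of_le_one hg0.le hg1.le (hk' i))

/-! ### Level constants and chaining -/

/-- Variance bound for the links of level `i`. For `i + 1` it is the width of the brackets of level
`i`; at level `0` it is the bound `p (1 - p) ≤ 1 / 4` valid for all sets. -/
noncomputable def lvlVar : ℕ → ℝ
  | 0 => 1 / 4
  | i + 1 => (1 / 4) ^ (i + 1)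

/-- Deviation allowed, in units of `R`, for the links of level `i`. -/
noncomputable def lvlTau : ℕ → ℝ
  | 0 => 1
  | i + 1 => (1 / 2) ^ i * (1.21 + 0.2 * i)

/-- The ratio `lvlTau i ^ 2 / (4 * lvlVar i)`; the tail exponent at level `i` is
`s (4.9 + L) * lvlQ i`. -/
noncomputable def lvlQ : ℕ → ℝ
  | 0 => 1
  | i + 1 => (1.21 + 0.2 * i) ^ 2

/-- The partial sum `lvlTau 0 + ⋯ + lvlTau i`, in closed form. -/
noncomputable def lvlT (i : ℕ) : ℝ := 3.82 - (1 / 2) ^ i * (2.82 + 0.4 * i)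

/-- Its `s`-th power bounds the number of brackets of level `i`. -/
noncomputable def lvlCard (i : ℕ) : ℝ := exp 1 * (7 * (i + 1) * 4 ^ i)

lemma lvlVar_pos (i : ℕ) : 0 < lvlVar i := by
  cases i <;> simp only [lvlVar] <;> positivity

lemma lvlTau_nonneg (i : ℕ) : 0 ≤ lvlTau i := by
  cases i <;> simp only [lvlTau] <;> positivity

lemma lvlQ_ge_one (i : ℕ) : 1 ≤ lvlQ i := by
  cases i with
  | zero => exact le_rfl
  | succ i =>
    have : (0 : ℝ) ≤ i := Nat.cast_nonneg i
    simp only [lvlQ]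
    nlinarith

lemma lvlTau_sq (i : ℕ) : lvlTau i ^ 2 = 4 * lvlVar i * lvlQ i := by
  cases i with
  | zero => norm_num [lvlTau, lvlVar, lvlQ]
  | succ i =>
    have : ((1 : ℝ) / 4) ^ i = ((1 / 2) ^ i) ^ 2 := by rw [← pow_mul, mul_comm, pow_mul]; norm_num
    simp only [lvlTau, lvlVar, lvlQ, pow_succ (1 / 4 : ℝ) i, this]
    ring

lemma lvlT_succ (i : ℕ) : lvlT i + lvlTau (i + 1) = lvlT (i + 1) := by
  simp only [lvlT, lvlTau, pow_succ]
  push_cast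
  ring

lemma lvlT_le (i : ℕ) : lvlT i ≤ 3.82 := by
  have : (0 : ℝ) ≤ (1 / 2) ^ i * (2.82 + 0.4 * i) := by positivity
  simp only [lvlT]
  linarith

lemma lvlCard_pos (i : ℕ) : 0 < lvlCard i := by simp only [lvlCard]; positivity

lemma lvlCard_mono (i : ℕ) : lvlCard i ≤ lvlCard (i + 1) := by
  simp only [lvlCard]
  have : (4 : ℝ) ^ i ≤ 4 ^ (i + 1) := pow_le_pow_right₀ (by norm_num) (Nat.le_succ i)
  push_cast
  gcongr
  linarith

/-- The numerical inequality that fixes `4.9` and `lvlTau`: the entropy of level `i`, together with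
the factor `2 ^ (i + 2)` for two-sidedness and for the share of level `i` in the total probability, is
absorbed by the tail exponent. -/
lemma lvl_const (i : ℕ) : 2 ^ (i + 2) * lvlCard i ≤ exp (4.9 * lvlQ i) := by
  cases i with
  | zero =>
    have h : (28 : ℝ) ≤ exp 3.9 := by
      have h1 : (2.7182818283 : ℝ) ^ 39 ≤ exp 1 ^ 39 := by
        gcongr
        exact exp_one_gt_d9.le
      have h2 : (exp 3.9) ^ 10 = exp 1 ^ 39 := by
        rw [← exp_nat_mul, ← exp_nat_mul]; norm_num
      refine le_of_pow_le_pow_left₀ (n := 10) (by norm_num) (exp_pos _).le ?_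
      rw [h2]
      exact le_trans (by norm_num) h1
    calc (2 : ℝ) ^ (0 + 2) * lvlCard 0 = exp 1 * 28 := by simp only [lvlCard]; norm_num; ring
      _ ≤ exp 1 * exp 3.9 := by gcongr
      _ = exp (4.9 * lvlQ 0) := by rw [← exp_add]; simp only [lvlQ]; norm_num
  | succ i =>
    have hi : (0 : ℝ) ≤ i := Nat.cast_nonneg i
    have hlog2 : log 2 < 0.6931471808 := log_two_lt_d9
    have h448 : (448 : ℝ) ≤ exp 6.1125 := by
      have h1 : (448 : ℝ) ^ 11 ≤ exp (97 * log 2) := by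
        have : exp (97 * log 2) = 2 ^ 97 := by
          rw [mul_comm, exp_mul, exp_log (by norm_num)]; norm_cast
        rw [this]; norm_num
      have h2 : exp (97 * log 2) ≤ exp 6.1125 ^ 11 := by
        rw [← exp_nat_mul]
        refine exp_le_exp.2 ?_
        push_cast
        linarith
      exact le_of_pow_le_pow_left₀ (n := 11) (by norm_num) (exp_pos _).le (h1.trans h2)
    have h8 : (8 : ℝ) ^ i ≤ exp (2.0795 * i) := by
      have : (8 : ℝ) ≤ exp 2.0795 := by
        have : exp (3 * log 2) = 8 := by
          rw [mul_comm, exp_mul, exp_log (by norm_num)]; norm_num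
        rw [← this]
        exact exp_le_exp.2 (by linarith)
      rw [mul_comm, exp_nat_mul]
      gcongr
    have hi2 : 1 + (i : ℝ) / 2 ≤ exp (i / 2) := by linarith [add_one_le_exp ((i : ℝ) / 2)]
    have h8' : (8 : ℝ) ^ i = 2 ^ i * 4 ^ i := by rw [← mul_pow]; norm_num
    calc (2 : ℝ) ^ (i + 1 + 2) * lvlCard (i + 1)
        = exp 1 * 448 * 8 ^ i * (1 + (i : ℝ) / 2) := by
          simp only [lvlCard, h8', pow_succ]; push_cast; ring
      _ ≤ exp 1 * exp 6.1125 * exp (2.0795 * i) * exp (i / 2) := by gcongr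
      _ = exp (1 + 6.1125 + 2.0795 * i + i / 2) := by rw [← exp_add, ← exp_add, ← exp_add]
      _ ≤ exp (4.9 * lvlQ (i + 1)) := by
          refine exp_le_exp.2 ?_
          simp only [lvlQ]
          nlinarith [sq_nonneg ((i : ℝ) - 0.53)]

lemma lvl_prob (s N i : ℕ) (hs : 1 ≤ s) {R L c : ℝ} (hL : 0 ≤ L)
    (hR : N * R ^ 2 = s * (4.9 + L)) (hc : c ≤ lvlCard i ^ s) :
    c * (2 * exp (-(N * (lvlTau i * R) ^ 2 / (4 * lvlVar i)))) ≤ (1 / 2) ^ (i + 1) * exp (-L) := by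
  have hv := lvlVar_pos i
  have hC := lvlCard_pos i
  have hs' : (1 : ℝ) ≤ s := by exact_mod_cast hs
  have hQ := lvlQ_ge_one i
  have e1 : N * (lvlTau i * R) ^ 2 / (4 * lvlVar i) = s * (4.9 + L) * lvlQ i := by
    rw [mul_pow, lvlTau_sq, ← hR]
    field_simp
  have e2 : s * (4.9 * lvlQ i) + L ≤ s * (4.9 + L) * lvlQ i := by
    have : 1 ≤ s * lvlQ i := one_le_mul_of_one_le_of_one_le hs' hQ
    nlinarith
  have e3 : exp (-(s * (4.9 * lvlQ i) + L)) ≤ ((2 ^ (i + 2) * lvlCard i) ^ s)⁻¹ * exp (-L) := by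
    rw [neg_add, exp_add, exp_neg, exp_nat_mul]
    gcongr
    exact lvl_const i
  have e4 : ((2 : ℝ) ^ (i + 2)) ≤ (2 ^ (i + 2)) ^ s := by
    refine le_self_pow₀ (one_le_pow₀ (by norm_num)) (by omega)
  calc c * (2 * exp (-(N * (lvlTau i * R) ^ 2 / (4 * lvlVar i))))
      ≤ lvlCard i ^ s * (2 * (((2 ^ (i + 2) * lvlCard i) ^ s)⁻¹ * exp (-L))) := by
        rw [e1]
        gcongr
        exact le_trans (exp_le_exp.2 (neg_le_neg e2)) e3
    _ = 2 * ((2 ^ (i + 2)) ^ s)⁻¹ * exp (-L) := by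
        rw [mul_pow]
        field_simp
    _ ≤ 2 * (2 ^ (i + 2))⁻¹ * exp (-L) := by gcongr
    _ = (1 / 2) ^ (i + 1) * exp (-L) := by
        rw [pow_succ (2 : ℝ) (i + 1), one_div, inv_pow]
        field_simp

/-- Brackets of level `i`, with `ε = 4 ^ (-(i + 1))` and `m = 6 (i + 1) 4 ^ i` in `exists_brackets`;
the condition `exp (-ε m) ≤ ε` becomes `4 ≤ exp 1.5`. -/
lemma exists_lvl_brackets (s : ℕ) (hs : 1 ≤ s) (i : ℕ) :
    ∃ B : Finset (Set (Fin s → ℝ) × Set (Fin s → ℝ)),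
      (B.card : ℝ) ≤ lvlCard i ^ s ∧
      (∀ b ∈ B, BoxOrEmpty s b.1 ∧ MeasurableSet b.2 ∧ b.1 ⊆ b.2 ∧
        (cubeMeasure s).real (b.2 \ b.1) ≤ lvlVar (i + 1)) ∧
      ∀ A, BoxOrEmpty s A → ∃ b ∈ B, b.1 ⊆ A ∧ A ⊆ b.2 := by
  have h4 : (1 : ℝ) ≤ 4 ^ i := one_le_pow₀ (by norm_num)
  have hm : 1 ≤ 6 * (i + 1) * 4 ^ i := Nat.succ_le_of_lt (by positivity)
  obtain ⟨B, h1, h2, h3⟩ := exists_brackets s (6 * (i + 1) * 4 ^ i) hs hm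
    (lvlVar (i + 1)) (lvlVar_pos _) (by
      have e : lvlVar (i + 1) * ((6 * (i + 1) * 4 ^ i : ℕ) : ℝ) = (i + 1 : ℕ) * 1.5 := by
        simp only [lvlVar, pow_succ, one_div, inv_pow]
        push_cast
        field_simp
        norm_num
      rw [e, exp_neg, exp_nat_mul, lvlVar, one_div, inv_pow]
      have : (4 : ℝ) ≤ exp 1.5 := by
        refine le_of_pow_le_pow_left₀ (n := 2) (by norm_num) (exp_pos _).le ?_
        have h1 : (2.7182818283 : ℝ) ^ 3 ≤ exp 1 ^ 3 := by
          gcongr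
          exact exp_one_gt_d9.le
        have h2 : (exp 1.5) ^ 2 = exp 1 ^ 3 := by
          rw [← exp_nat_mul, ← exp_nat_mul]; norm_num
        rw [h2]
        exact le_trans (by norm_num) h1
      gcongr)
  refine ⟨B, h1.trans ?_, h2, h3⟩
  simp only [lvlCard]
  push_cast
  gcongr
  nlinarith [Nat.cast_nonneg (α := ℝ) i]

/-- Chaining through the levels `0, …, K`: off a small event all lower brackets of level `K` deviate by
at most `lvlT K * R`. -/
lemma chain_event (s N : ℕ) (hs : 1 ≤ s) (hN : 1 ≤ N) {R L : ℝ} (hL : 0 ≤ L) (hR0 : 0 ≤ R)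
    (hR : N * R ^ 2 = s * (4.9 + L))
    (B : ℕ → Finset (Set (Fin s → ℝ) × Set (Fin s → ℝ)))
    (hB1 : ∀ i, ((B i).card : ℝ) ≤ lvlCard i ^ s)
    (hB2 : ∀ i, ∀ b ∈ B i, BoxOrEmpty s b.1 ∧ MeasurableSet b.2 ∧ b.1 ⊆ b.2 ∧
        (cubeMeasure s).real (b.2 \ b.1) ≤ lvlVar (i + 1))
    (hB3 : ∀ i A, BoxOrEmpty s A → ∃ b ∈ B i, b.1 ⊆ A ∧ A ⊆ b.2) (K : ℕ)
    (hK : ∀ i ≤ K, lvlTau i * R ≤ 2 * lvlVar i) :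
    ∃ E : Set (Fin N → Fin s → ℝ),
      (Measure.pi fun _ : Fin N => cubeMeasure s).real E ≤ (1 - (1 / 2) ^ (K + 1)) * exp (-L) ∧
      ∀ z ∉ E, ∀ b ∈ B K, |dev (cubeMeasure s) b.1 z| ≤ lvlT K * R := by
  induction K with
  | zero =>
    obtain ⟨E, hE, hz⟩ := exists_event (cubeMeasure s) N hN (B 0) (fun b => b.1)
      (fun b hb => (hB2 0 b hb).1.measurableSet) (lvlVar_pos 0)
      (fun b _ => by simp only [lvlVar]; nlinarith [sq_nonneg ((cubeMeasure s).real b.1 - 1 / 2)])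
      (mul_nonneg (lvlTau_nonneg 0) hR0) (hK 0 le_rfl) (lvl_prob s N 0 hs hL hR (hB1 0))
    refine ⟨E, hE.trans (le_of_eq (by norm_num)), fun z hzE b hb => (hz z hzE b hb).trans ?_⟩
    simp only [lvlTau, lvlT]
    norm_num
  | succ K ih =>
    obtain ⟨E, hE, hz⟩ := ih fun i hi => hK i (hi.trans (Nat.le_succ K))
    choose! p hp1 hp2 hp3 using hB3 K
    have hps : ∀ b ∈ B (K + 1), p b.1 ∈ B K := fun b hb => hp1 _ (hB2 _ b hb).1
    obtain ⟨E', hE', hz'⟩ := exists_event (cubeMeasure s) N hN (B (K + 1))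
      (fun b => b.1 \ (p b.1).1)
      (fun b hb => (hB2 _ b hb).1.measurableSet.diff (hB2 _ _ (hps b hb)).1.measurableSet)
      (lvlVar_pos (K + 1))
      (fun b hb => by
        have h1 : (cubeMeasure s).real (b.1 \ (p b.1).1) ≤ lvlVar (K + 1) :=
          (measureReal_mono (Set.sdiff_subset_sdiff_left (hp3 _ (hB2 _ b hb).1))).trans
            (hB2 K _ (hps b hb)).2.2.2
        have h2 : 0 ≤ (cubeMeasure s).real (b.1 \ (p b.1).1) := measureReal_nonneg
        nlinarith)
      (mul_nonneg (lvlTau_nonneg _) hR0) (hK _ le_rfl) (lvl_prob s N _ hs hL hR (hB1 _))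
    refine ⟨E ∪ E', ?_, ?_⟩
    · refine (measureReal_union_le _ _).trans ((add_le_add hE hE').trans (le_of_eq ?_))
      simp only [pow_succ]
      ring
    · intro z hzE b hb
      rw [Set.mem_union, not_or] at hzE
      rw [dev_add (cubeMeasure s) (hB2 _ _ (hps b hb)).1.measurableSet (hp2 _ (hB2 _ b hb).1),
        ← lvlT_succ, add_mul]
      exact (abs_add_le _ _).trans (add_le_add (hz z hzE.1 _ (hps b hb)) (hz' z hzE.2 b hb))

/-- The stopping level: the bracket width there is at most `1.88 R`, and the restriction `t ≤ 2 v` of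
the tail bound holds for all links up to that level and for the final step from lower to upper
brackets, which is treated as a link of level `K + 1`. -/
lemma exists_last_level {R : ℝ} (hR0 : 0 < R) (hR1 : 5.7 * R < 1) :
    ∃ K, lvlVar (K + 1) ≤ 1.88 * R ∧ ∀ i ≤ K + 1, lvlTau i * R ≤ 2 * lvlVar i := by
  classical
  have hex : ∃ K, lvlVar (K + 1) ≤ 1.88 * R := by
    obtain ⟨n, hn⟩ := exists_pow_lt_of_lt_one (show (0 : ℝ) < 1.88 * R by positivity)
      (show (1 / 4 : ℝ) < 1 by norm_num)
    refine ⟨n, le_trans ?_ hn.le⟩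
    exact pow_le_pow_of_le_one (by norm_num) (by norm_num) (Nat.le_succ n)
  refine ⟨Nat.find hex, Nat.find_spec hex, fun i hi => ?_⟩
  have hbefore : ∀ j, j < Nat.find hex → 1.88 * R < (1 / 4) ^ (j + 1) := fun j hj =>
    not_le.1 (Nat.find_min hex hj)
  have htau : ∀ j : ℕ, lvlTau (j + 1) ≤ 1.21 := fun j => by
    have h1 : 1 + (j : ℝ) ≤ 2 ^ j := by
      have := Nat.lt_two_pow_self (n := j)
      exact_mod_cast (by omega : 1 + j ≤ 2 ^ j)
    have h2 : (1 / 2 : ℝ) ^ j * 2 ^ j = 1 := by rw [← mul_pow]; norm_num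
    have h3 : (0 : ℝ) < (1 / 2) ^ j := by positivity
    have h4 : (0 : ℝ) ≤ j := Nat.cast_nonneg j
    simp only [lvlTau]
    calc (1 / 2 : ℝ) ^ j * (1.21 + 0.2 * j) ≤ (1 / 2) ^ j * (1.21 * 2 ^ j) := by
          gcongr; linarith
      _ = 1.21 := by linear_combination 1.21 * h2
  -- Levels `0` and `1` only need `R < 1 / 5.7`; beyond them the level before the last one is used.
  rcases i with _ | _ | j
  · simp only [lvlTau, lvlVar]; linarith
  · simp only [lvlTau, lvlVar]; norm_num; linarith
  · have h1 := hbefore j (by omega)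
    have h2 : lvlTau (j + 1 + 1) ≤ 0.705 := by
      have h3 : lvlTau (j + 1 + 1) ≤ lvlTau (j + 1) * (1 / 2) + 0.1 := by
        have : (1 / 2 : ℝ) ^ j ≤ 1 := pow_le_one₀ (by norm_num) (by norm_num)
        simp only [lvlTau, pow_succ]
        push_cast
        linarith
      linarith [htau j]
    have h3 : lvlVar (j + 1 + 1) = (1 / 4) ^ (j + 1) * (1 / 4) := by simp only [lvlVar, pow_succ]
    rw [h3]
    nlinarith

/-! ### The star-discrepancy -/

lemma dev_box_eq (s N : ℕ) (x : Fin s → ℝ) (h0 : 0 ≤ x) (h1 : x ≤ 1) (z : Fin N → Fin s → ℝ) :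
    (Nat.card {n : Fin N // z n ∈ Set.Icc 0 x} : ℝ) / N - ∏ i, x i
      = dev (cubeMeasure s) (Set.Icc 0 x) z := by
  classical
  rw [dev, cubeMeasure_box s x h0 h1, Nat.card_eq_fintype_card, Fintype.card_subtype]
  simp only [Set.indicator_apply, Pi.one_apply, Finset.sum_boole]

lemma starDiscrepancy_le_one (s N : ℕ) (z : Fin N → Fin s → ℝ) : starDiscrepancy s N z ≤ 1 := by
  refine Real.iSup_le (fun x => ?_) zero_le_one
  have h1 : (Nat.card {n : Fin N // z n ∈ Set.Icc 0 (x : Fin s → ℝ)} : ℝ) / N ≤ 1 := by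
    refine div_le_one_of_le₀ ?_ (Nat.cast_nonneg N)
    have := Finite.card_subtype_le (fun n : Fin N => z n ∈ Set.Icc 0 (x : Fin s → ℝ))
    rw [Nat.card_fin] at this
    exact_mod_cast this
  have h2 : 0 ≤ (Nat.card {n : Fin N // z n ∈ Set.Icc 0 (x : Fin s → ℝ)} : ℝ) / N := by positivity
  have h3 : ∏ i, (x : Fin s → ℝ) i ≤ 1 :=
    Finset.prod_le_one (fun i _ => x.2.1 i) fun i _ => x.2.2 i
  have h4 : 0 ≤ ∏ i, (x : Fin s → ℝ) i := Finset.prod_nonneg fun i _ => x.2.1 i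
  rw [abs_le]
  constructor <;> linarith

/-- Off an event of probability at most `exp (-L)` the star-discrepancy is at most `5.7 R`. A box between
`lo` and `up` deviates by at most the deviations of `lo` and `up \ lo` plus the bracket width. -/
lemma discrepancy_event (s N : ℕ) (hs : 1 ≤ s) (hN : 1 ≤ N) {R L : ℝ} (hL : 0 ≤ L) (hR0 : 0 < R)
    (hR : N * R ^ 2 = s * (4.9 + L)) :
    ∃ E : Set (Fin N → Fin s → ℝ),
      (Measure.pi fun _ : Fin N => cubeMeasure s).real E ≤ exp (-L) ∧
      ∀ z ∉ E, starDiscrepancy s N z ≤ 5.7 * R := by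
  rcases le_or_gt 1 (5.7 * R) with hbig | hR1
  · exact ⟨∅, by simpa using (exp_pos _).le,
      fun z _ => (starDiscrepancy_le_one s N z).trans hbig⟩
  choose B hB1 hB2 hB3 using exists_lvl_brackets s hs
  obtain ⟨K, hK1, hK2⟩ := exists_last_level hR0 hR1
  obtain ⟨E, hE, hz⟩ := chain_event s N hs hN hL hR0.le hR B hB1 hB2 hB3 K
    fun i hi => hK2 i (hi.trans (Nat.le_succ K))
  obtain ⟨E', hE', hz'⟩ := exists_event (cubeMeasure s) N hN (B K) (fun b => b.2 \ b.1)
    (fun b hb => (hB2 _ b hb).2.1.diff (hB2 _ b hb).1.measurableSet) (lvlVar_pos (K + 1))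
    (fun b hb => by
      have h1 := (hB2 K b hb).2.2.2
      have h2 : 0 ≤ (cubeMeasure s).real (b.2 \ b.1) := measureReal_nonneg
      nlinarith)
    (mul_nonneg (lvlTau_nonneg _) hR0.le) (hK2 _ le_rfl)
    (lvl_prob s N (K + 1) hs hL hR ((hB1 K).trans (by
      have := lvlCard_pos K
      have := lvlCard_mono K
      gcongr)))
  refine ⟨E ∪ E', ?_, fun z hzE => ?_⟩
  · refine (measureReal_union_le _ _).trans ((add_le_add hE hE').trans ?_)
    have : 0 ≤ (1 / 2 : ℝ) ^ (K + 1) * exp (-L) := by positivity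
    rw [pow_succ _ (K + 1)]
    linarith
  · rw [Set.mem_union, not_or] at hzE
    refine Real.iSup_le (fun x => ?_) (by positivity)
    rw [dev_box_eq s N x x.2.1 x.2.2]
    have hbox : BoxOrEmpty s (Set.Icc 0 (x : Fin s → ℝ)) := Or.inr ⟨x, x.2.1, x.2.2, rfl⟩
    obtain ⟨b, hb, hbl, hbu⟩ := hB3 K _ hbox
    have hLm := (hB2 K b hb).1.measurableSet
    have hUL := (hB2 K b hb).2.2.1
    have hδ := (hB2 K b hb).2.2.2
    have e1 := abs_le.1 (hz z hzE.1 b hb)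
    have e2 := abs_le.1 (hz' z hzE.2 b hb)
    have e3 := dev_add (cubeMeasure s) hLm hUL z
    have e4 := dev_le_of_subset (cubeMeasure s) hbl z
    have e5 := dev_le_of_subset (cubeMeasure s) hbu z
    have e6 : (cubeMeasure s).real (b.2 \ b.1)
        = (cubeMeasure s).real b.2 - (cubeMeasure s).real b.1 := measureReal_sdiff hUL hLm
    have e7 : (cubeMeasure s).real b.1 ≤ (cubeMeasure s).real (Set.Icc 0 (x : Fin s → ℝ)) :=
      measureReal_mono hbl
    have e8 : (cubeMeasure s).real (Set.Icc 0 (x : Fin s → ℝ)) ≤ (cubeMeasure s).real b.2 :=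
      measureReal_mono hbu
    have e9 : lvlT K * R + lvlTau (K + 1) * R ≤ 3.82 * R := by
      rw [← add_mul, lvlT_succ]
      exact mul_le_mul_of_nonneg_right (lvlT_le _) hR0.le
    have e10 := mul_nonneg (lvlTau_nonneg (K + 1)) hR0.le
    rw [abs_le]
    constructor <;> linarith

theorem stmt_1 (s N : ℕ) (hs : 1 ≤ s) (hN : 1 ≤ N) (q : ℝ) (hq : q ∈ Set.Ioo (0:ℝ) 1) :
    ENNReal.ofReal q ≤
      (Measure.pi fun _ : Fin N => Measure.pi fun _ : Fin s => volume.restrict (Set.Icc (0:ℝ) 1))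
        {z : Fin N → Fin s → ℝ |
          starDiscrepancy s N z ≤
            5.7 * Real.sqrt (4.9 + Real.log (1 - q)⁻¹ ) * (Real.sqrt s / Real.sqrt N)} := by
  obtain ⟨hq0, hq1⟩ := hq
  have hs' : (0 : ℝ) < s := by exact_mod_cast hs
  have hN' : (0 : ℝ) < N := by exact_mod_cast hN
  set L := Real.log (1 - q)⁻¹ with hLdef
  have hL : 0 ≤ L := Real.log_nonneg ((one_le_inv₀ (by linarith)).2 (by linarith))
  have hexpL : exp (-L) = 1 - q := by
    rw [hLdef, Real.log_inv, neg_neg, exp_log (by linarith)]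
  obtain ⟨E, hE, hz⟩ := discrepancy_event s N hs hN
    (R := Real.sqrt (4.9 + L) * (Real.sqrt s / Real.sqrt N)) hL (by positivity) (by
      rw [mul_pow, div_pow, Real.sq_sqrt (by linarith), Real.sq_sqrt hs'.le, Real.sq_sqrt hN'.le]
      field_simp)
  rw [hexpL] at hE
  set P := Measure.pi fun _ : Fin N => cubeMeasure s with hP
  set S := {z : Fin N → Fin s → ℝ | starDiscrepancy s N z ≤
    5.7 * Real.sqrt (4.9 + L) * (Real.sqrt s / Real.sqrt N)} with hS
  have hcov : (Set.univ : Set (Fin N → Fin s → ℝ)) ⊆ S ∪ E := fun z _ => by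
    by_cases h : z ∈ E
    · exact Or.inr h
    · refine Or.inl ?_
      have := hz z h
      rwa [← mul_assoc] at this
  have h1 : 1 ≤ P.real S + P.real E := by
    rw [← probReal_univ (μ := P)]
    exact (measureReal_mono hcov).trans (measureReal_union_le _ _)
  refine ENNReal.ofReal_le_of_le_toReal ?_
  change q ≤ P.real S
  linarith
end

section
/- For every dimension s ≥ 1 and every ε ∈ (0,1] there exists a positive integer N with N ≤ ⌈169 · s · ε^{−2}⌉ and a set of N points z_1, …, z_N in [0,1]^s whose star-discrepancy satisfies D*_N(z_1, …, z_N) ≤ ε. In particular, the inverse of the star-discrepancy satisfies n*(s, ε) ≤ ⌈169 · s · ε^{−2}⌉. -/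
/-!
The sample is drawn at random: `N = ⌈169 s / ε ^ 2⌉` independent uniform points of the cube have
star-discrepancy at most `ε` with positive probability. The proof is a chaining argument over
brackets for the anchored boxes `[0, x]`.

*Bracketing* (`exists_bracket`, `card_bracketFamily_le`). In the coordinates `-log x i`, take the
grid of mesh `1 / (s a)` cut off at `∑ -log x i ≤ a`. A box at a grid point and the box one step
further in every coordinate differ in volume by at most `1 / a`, and boxes beyond the cut-off have
volume at most `exp (-a) ≤ 1 / a`. Counting lattice points in a simplex shows that at most
`(9 a ^ 2) ^ s` brackets are needed; the absence of a factor `s ^ s` is what makes the final bound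
linear in `s`.

*Concentration* (`exists_sample`). For a function bounded by `1` with second moment at most `v`, the
exponential moment estimate gives a Bernstein tail `2 exp (-N t ^ 2 / (4 v))` as long as `t ≤ 2 v`,
and a union bound over finitely many functions produces a single good sample.

*Chaining* (`exists_chain_sample`, `deviation_le_of_chain`). At level `k` the brackets have width
`64 ^ (-k)`. The brackets of `x` at levels `k` and `k + 1` differ by a set of measure at most
`(65 / 64) 64 ^ (-k)`, and the tail at `t = (16 / 25) ε 5 ^ (-k)` is `exp (-17 s (64 / 25) ^ k)`,
which beats the number of pairs of brackets (`tail_le`). Telescoping up to the first level of width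
at most `ε / 5` gives total error at most `(4 / 5) ε + ε / 5 = ε`.
-/

open MeasureTheory Real

/-! ### Bernstein's inequality and the union bound -/

/-- The Bernstein-type bound on a single exponential moment, from `exp x ≤ 1 + x + x ^ 2` for
`|x| ≤ 1`. -/
lemma integral_exp_le {X : Type*} [MeasurableSpace X] (ν : Measure X) [IsProbabilityMeasure ν]
    {g : X → ℝ} (hg : Measurable g) (hb : ∀ x, |g x| ≤ 1) {v : ℝ} (hv : ∫ x, g x ^ 2 ∂ν ≤ v)
    {l : ℝ} (hl : |l| ≤ 1) :
    Integrable (fun x => exp (l * g x)) ν ∧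
      ∫ x, exp (l * g x) ∂ν ≤ exp (l * ∫ x, g x ∂ν + l ^ 2 * v) := by
  have hlg : ∀ x, |l * g x| ≤ 1 := fun x => by
    rw [abs_mul]; exact mul_le_one₀ hl (abs_nonneg _) (hb x)
  have hint : Integrable (fun x => exp (l * g x)) ν := by
    refine Integrable.of_bound (C := exp 1) (by fun_prop) (ae_of_all _ fun x => ?_)
    rw [Real.norm_eq_abs, abs_of_pos (exp_pos _)]
    exact exp_le_exp.2 (le_of_abs_le (hlg x))
  have hg1 : Integrable g ν :=
    Integrable.of_bound (C := 1) (by fun_prop) (ae_of_all _ fun x => hb x)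
  have hg2 : Integrable (fun x => g x ^ 2) ν := by
    refine Integrable.of_bound (C := 1) (by fun_prop) (ae_of_all _ fun x => ?_)
    rw [Real.norm_eq_abs, abs_pow]
    exact pow_le_one₀ (abs_nonneg _) (hb x)
  refine ⟨hint, ?_⟩
  calc ∫ x, exp (l * g x) ∂ν ≤ ∫ x, (1 + l * g x + l ^ 2 * g x ^ 2) ∂ν := by
        refine integral_mono hint (by fun_prop) fun x => ?_
        have := le_of_abs_le (Real.abs_exp_sub_one_sub_id_le (hlg x))
        simp only
        nlinarith
    _ = 1 + l * ∫ x, g x ∂ν + l ^ 2 * ∫ x, g x ^ 2 ∂ν := by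
        rw [integral_add (by fun_prop) (by fun_prop), integral_add (by fun_prop) (by fun_prop),
          integral_const_mul, integral_const_mul]
        simp
    _ ≤ 1 + l * ∫ x, g x ∂ν + l ^ 2 * v := by gcongr
    _ ≤ exp (l * ∫ x, g x ∂ν + l ^ 2 * v) := by
        have := add_one_le_exp (l * ∫ x, g x ∂ν + l ^ 2 * v)
        linarith

lemma integral_exp_sum_le {X : Type*} [MeasurableSpace X] (ν : Measure X)
    [IsProbabilityMeasure ν] (N : ℕ)
    {g : X → ℝ} (hg : Measurable g) (hb : ∀ x, |g x| ≤ 1) {v : ℝ} (hv : ∫ x, g x ^ 2 ∂ν ≤ v)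
    {l : ℝ} (hl : |l| ≤ 1) (c : ℝ) :
    Integrable (fun z : Fin N → X => exp (l * ∑ n, g (z n) - c)) (Measure.pi fun _ => ν) ∧
      ∫ z : Fin N → X, exp (l * ∑ n, g (z n) - c) ∂(Measure.pi fun _ => ν)
        ≤ exp (N * (l * ∫ x, g x ∂ν + l ^ 2 * v) - c) := by
  obtain ⟨h1, h2⟩ := integral_exp_le ν hg hb hv hl
  have e : ∀ z : Fin N → X, exp (l * ∑ n, g (z n) - c)
      = (∏ n, exp (l * g (z n))) * exp (-c) := fun z => by
    rw [← exp_sum, ← exp_add, Finset.mul_sum]; rfl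
  simp_rw [e]
  refine ⟨(Integrable.fintype_prod (f := fun _ x => exp (l * g x)) fun _ => h1).mul_const _, ?_⟩
  rw [integral_mul_const, integral_fintype_prod_eq_pow (fun x => exp (l * g x)), sub_eq_add_neg,
    exp_add, Fintype.card_fin, exp_nat_mul]
  have : 0 ≤ ∫ x, exp (l * g x) ∂ν := integral_nonneg fun x => (exp_pos _).le
  gcongr

/-- Union bound: if the Bernstein tail bounds of finitely many functions sum up to less than `1`,
some sample `z` satisfies all the deviation inequalities at once. -/
lemma exists_sample {X : Type*} [MeasurableSpace X] (ν : Measure X) [IsProbabilityMeasure ν]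
    (N : ℕ) {ι : Type*} (J : Finset ι) (f : ι → X → ℝ) (l t v : ι → ℝ)
    (hf : ∀ j ∈ J, Measurable (f j)) (hb : ∀ j ∈ J, ∀ x, |f j x| ≤ 1)
    (hv : ∀ j ∈ J, ∫ x, f j x ^ 2 ∂ν ≤ v j) (hl0 : ∀ j ∈ J, 0 < l j) (hl1 : ∀ j ∈ J, l j ≤ 1)
    (hsum : ∑ j ∈ J, 2 * exp (N * (l j ^ 2 * v j - l j * t j)) < 1) :
    ∃ z : Fin N → X, ∀ j ∈ J, |∑ n, f j (z n) - N * ∫ x, f j x ∂ν| ≤ N * t j := by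
  set m : ι → ℝ := fun j => ∫ x, f j x ∂ν with hm
  have hp : ∀ j ∈ J, _ := fun j hj => integral_exp_sum_le ν N (hf j hj) (hb j hj) (hv j hj)
    (l := l j) (abs_le.2 ⟨by linarith [hl0 j hj], hl1 j hj⟩) (l j * (N * (m j + t j)))
  have hn : ∀ j ∈ J, _ := fun j hj => integral_exp_sum_le ν N (hf j hj) (hb j hj) (hv j hj)
    (l := -l j) (abs_le.2 ⟨by linarith [hl1 j hj], by linarith [hl0 j hj]⟩)
    (-l j * (N * (m j - t j)))
  have hint : Integrable (fun z : Fin N → X => ∑ j ∈ J,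
      (exp (l j * ∑ n, f j (z n) - l j * (N * (m j + t j)))
        + exp (-l j * ∑ n, f j (z n) - -l j * (N * (m j - t j))))) (Measure.pi fun _ => ν) :=
    integrable_finsetSum _ fun j hj => Integrable.add (hp j hj).1 (hn j hj).1
  obtain ⟨z, hz⟩ := exists_le_integral hint
  refine ⟨z, fun j hj => ?_⟩
  have hlt := hz.trans_lt (b := _) (c := (1 : ℝ)) <| by
    rw [integral_finsetSum (f := fun j (z : Fin N → X) =>
      (exp (l j * ∑ n, f j (z n) - l j * (N * (m j + t j)))
        + exp (-l j * ∑ n, f j (z n) - -l j * (N * (m j - t j)))))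
      _ fun j hj => Integrable.add (hp j hj).1 (hn j hj).1]
    refine lt_of_le_of_lt (Finset.sum_le_sum fun j hj => ?_) hsum
    rw [integral_add (hp j hj).1 (hn j hj).1, two_mul]
    refine add_le_add ((hp j hj).2.trans_eq ?_) ((hn j hj).2.trans_eq ?_)
    · congr 1; simp only [hm]; ring
    · congr 1; simp only [hm]; ring
  have hj1 := (Finset.single_le_sum (f := fun j =>
      (exp (l j * ∑ n, f j (z n) - l j * (N * (m j + t j)))
        + exp (-l j * ∑ n, f j (z n) - -l j * (N * (m j - t j)))))
      (fun j _ => by positivity) hj).trans_lt hlt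
  have e1 : exp (l j * ∑ n, f j (z n) - l j * (N * (m j + t j))) < 1 :=
    lt_of_le_of_lt (le_add_of_nonneg_right (exp_pos _).le) hj1
  have e2 : exp (-l j * ∑ n, f j (z n) - -l j * (N * (m j - t j))) < 1 :=
    lt_of_le_of_lt (le_add_of_nonneg_left (exp_pos _).le) hj1
  rw [exp_lt_one_iff] at e1 e2
  have hlj := hl0 j hj
  rw [abs_le]
  constructor
  · have : l j * (N * (m j - t j)) ≤ l j * ∑ n, f j (z n) := by linarith
    have := le_of_mul_le_mul_left this hlj
    simp only [hm] at this ⊢; linarith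
  · have : l j * ∑ n, f j (z n) ≤ l j * (N * (m j + t j)) := by linarith
    have := le_of_mul_le_mul_left this hlj
    simp only [hm] at this ⊢; linarith

/-! ### Bracketing of anchored boxes -/

/-- The unit cube `[0,1]^s`, with its uniform probability measure `volume`. -/
abbrev Cube (s : ℕ) : Type := Fin s → unitInterval

/-- The anchored box `[0, c]`, as a subset of the cube. -/
def anchoredBox {s : ℕ} (c : Fin s → ℝ) : Set (Cube s) := {y | ∀ i, (y i : ℝ) ≤ c i}

lemma measurableSet_anchoredBox {s : ℕ} (c : Fin s → ℝ) : MeasurableSet (anchoredBox c) := by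
  unfold anchoredBox
  measurability

lemma volume_anchoredBox {s : ℕ} {c : Fin s → ℝ} (h0 : ∀ i, 0 ≤ c i) (h1 : ∀ i, c i ≤ 1) :
    (volume : Measure (Cube s)).real (anchoredBox c) = ∏ i, c i := by
  have e : anchoredBox c = Set.univ.pi fun i => Set.Iic (⟨c i, h0 i, h1 i⟩ : unitInterval) := by
    ext y; simp only [anchoredBox, Set.mem_pi, Set.mem_univ, true_imp_iff, Set.mem_Iic]; rfl
  rw [e, Measure.real, volume_pi_pi, ENNReal.toReal_prod]
  refine Finset.prod_congr rfl fun i _ => ?_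
  rw [unitInterval.volume_Iic, ENNReal.toReal_ofReal (h0 i)]

/-- Exponent vectors of total degree at most `s * m`. -/
def simplexGrid (s m : ℕ) : Finset (Fin s → ℕ) :=
  {n ∈ Fintype.piFinset fun _ : Fin s => Finset.range (s * m + 1) | ∑ i, n i ≤ s * m}

lemma mem_simplexGrid {s m : ℕ} {n : Fin s → ℕ} : n ∈ simplexGrid s m ↔ ∑ i, n i ≤ s * m := by
  simp only [simplexGrid, Finset.mem_filter, Fintype.mem_piFinset, Finset.mem_range,
    and_iff_right_iff_imp]
  intro h i
  have := Finset.single_le_sum (f := n) (fun _ _ => Nat.zero_le _) (Finset.mem_univ i)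
  omega

/-- The generating-function bound `#{n : ∑ n ≤ s m} ≤ r ^ (- s m) * (∑ r ^ j) ^ s` at
`r = m / (m + 1)`. -/
lemma card_simplexGrid_le {s m : ℕ} (hm : 0 < m) :
    ((simplexGrid s m).card : ℝ) ≤ (exp 1 * (m + 1)) ^ s := by
  have hm' : (0 : ℝ) < m := by exact_mod_cast hm
  set r : ℝ := m / (m + 1) with hr
  have hr0 : 0 < r := by positivity
  have hr1 : r < 1 := by rw [hr, div_lt_one (by positivity)]; linarith
  have hgeo : ∑ j ∈ Finset.range (s * m + 1), r ^ j ≤ m + 1 := by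
    rw [geom_sum_eq hr1.ne, ← neg_div_neg_eq, div_le_iff₀ (by linarith)]
    have : (m + 1) * -(r - 1) = 1 := by rw [hr]; field_simp; ring
    rw [this]
    have := pow_pos hr0 (s * m + 1)
    linarith
  have h1 : ((simplexGrid s m).card : ℝ) * r ^ (s * m) ≤ (m + 1) ^ s := by
    calc ((simplexGrid s m).card : ℝ) * r ^ (s * m)
        = ∑ n ∈ simplexGrid s m, r ^ (s * m) := by simp
      _ ≤ ∑ n ∈ simplexGrid s m, ∏ i, r ^ n i := by
          refine Finset.sum_le_sum fun n hn => ?_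
          rw [Finset.prod_pow_eq_pow_sum]
          exact pow_le_pow_of_le_one hr0.le hr1.le (mem_simplexGrid.1 hn)
      _ ≤ ∑ n ∈ Fintype.piFinset fun _ : Fin s => Finset.range (s * m + 1), ∏ i, r ^ n i :=
          Finset.sum_le_sum_of_subset_of_nonneg (Finset.filter_subset _ _)
            fun _ _ _ => by positivity
      _ = ∏ i : Fin s, ∑ j ∈ Finset.range (s * m + 1), r ^ j :=
          (Finset.prod_univ_sum (fun _ : Fin s => Finset.range (s * m + 1))
            fun _ j => r ^ j).symm
      _ = (∑ j ∈ Finset.range (s * m + 1), r ^ j) ^ s := by simp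
      _ ≤ (m + 1) ^ s := by gcongr
  have h2 : 1 ≤ exp 1 * r ^ m := by
    have h3 : ((1 : ℝ) / r) ^ m ≤ exp 1 := by
      have : (1 : ℝ) / r ≤ exp (1 / m) := by
        have := add_one_le_exp (1 / (m : ℝ))
        refine le_trans (le_of_eq ?_) this
        rw [hr]; field_simp; ring
      calc ((1 : ℝ) / r) ^ m ≤ (exp (1 / m)) ^ m := by gcongr
        _ = exp 1 := by rw [← exp_nat_mul]; congr 1; field_simp
    rw [div_pow, one_pow, div_le_iff₀ (by positivity)] at h3
    exact h3
  calc ((simplexGrid s m).card : ℝ) = (simplexGrid s m).card * 1 := by ring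
    _ ≤ (simplexGrid s m).card * (exp 1 * r ^ m) ^ s := by
        gcongr; exact one_le_pow₀ h2
    _ = exp 1 ^ s * ((simplexGrid s m).card * r ^ (s * m)) := by rw [mul_pow, ← pow_mul]; ring
    _ ≤ exp 1 ^ s * (m + 1) ^ s := by gcongr
    _ = _ := by rw [mul_pow]

/-- The corner `(exp (-n i / (s a)))` of the logarithmic grid of mesh `1 / (s a)`. -/
noncomputable def gridCorner (s a : ℕ) (n : Fin s → ℕ) : Fin s → ℝ :=
  fun i => exp (-((n i : ℝ) / (s * a)))

open Classical in
/-- The brackets of width `1 / a`: the boxes at grid points of `simplexGrid s (a ^ 2)`, their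
shifts by one grid step in every coordinate, and the empty set. -/
noncomputable def bracketFamily (s a : ℕ) : Finset (Set (Cube s)) :=
  insert ∅ ((simplexGrid s (a ^ 2)).image (fun n => anchoredBox (gridCorner s a n)) ∪
    (simplexGrid s (a ^ 2)).image (fun n => anchoredBox (gridCorner s a fun i => n i + 1)))

lemma measurableSet_bracketFamily {s a : ℕ} {A : Set (Cube s)} (hA : A ∈ bracketFamily s a) :
    MeasurableSet A := by
  simp only [bracketFamily, Finset.mem_insert, Finset.mem_union, Finset.mem_image] at hA
  rcases hA with rfl | ⟨n, -, rfl⟩ | ⟨n, -, rfl⟩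
  · exact MeasurableSet.empty
  · exact measurableSet_anchoredBox _
  · exact measurableSet_anchoredBox _

lemma card_bracketFamily_le {s a : ℕ} (hs : 1 ≤ s) (ha : 64 ≤ a) :
    ((bracketFamily s a).card : ℝ) ≤ (9 * (a : ℝ) ^ 2) ^ s := by
  have hS : (1 : ℝ) ≤ (simplexGrid s (a ^ 2)).card := by
    have : 0 < (simplexGrid s (a ^ 2)).card :=
      Finset.card_pos.2 ⟨0, mem_simplexGrid.2 (by simp)⟩
    exact_mod_cast this
  have h3 : ((bracketFamily s a).card : ℝ) ≤ 3 * (simplexGrid s (a ^ 2)).card := by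
    have : (bracketFamily s a).card
        ≤ (simplexGrid s (a ^ 2)).card + (simplexGrid s (a ^ 2)).card + 1 := by
      refine (Finset.card_insert_le _ _).trans ?_
      gcongr
      exact (Finset.card_union_le _ _).trans (add_le_add Finset.card_image_le Finset.card_image_le)
    have : ((bracketFamily s a).card : ℝ)
        ≤ (simplexGrid s (a ^ 2)).card + (simplexGrid s (a ^ 2)).card + 1 := by
      exact_mod_cast this
    linarith
  have ha' : (64 : ℝ) ≤ a := by exact_mod_cast ha
  have hc := card_simplexGrid_le (s := s) (m := a ^ 2) (by positivity)
  push_cast at hc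
  calc ((bracketFamily s a).card : ℝ) ≤ 3 * (simplexGrid s (a ^ 2)).card := h3
    _ ≤ 3 ^ s * (exp 1 * ((a : ℝ) ^ 2 + 1)) ^ s := by
        gcongr
        exact le_self_pow₀ (by norm_num) (by omega)
    _ = (3 * (exp 1 * ((a : ℝ) ^ 2 + 1))) ^ s := (mul_pow _ _ _).symm
    _ ≤ (9 * (a : ℝ) ^ 2) ^ s := by
        refine pow_le_pow_left₀ (by positivity) ?_ s
        have := Real.exp_one_lt_d9
        nlinarith

/-- A grid point `n` of the simplex with maximal degree among those with `x ≤ gridCorner n` gives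
the upper box. If the degree is `s a ^ 2`, that box has volume `exp (-a)`, and the empty set is the
lower bracket. Otherwise no coordinate of `n` can be increased, so the box at `n + 1` lies below
`x`, and its volume is smaller by the factor `exp (-1 / a)`. -/
lemma exists_bracket {s a : ℕ} (hs : 1 ≤ s) (ha : 1 ≤ a) (x : Fin s → ℝ) (hx1 : ∀ i, x i ≤ 1) :
    ∃ A ∈ bracketFamily s a, ∃ B ∈ bracketFamily s a, A ⊆ anchoredBox x ∧ anchoredBox x ⊆ B ∧
      volume.real B - volume.real A ≤ 1 / (a : ℝ) := by
  classical
  have hs' : (0 : ℝ) < s := by exact_mod_cast hs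
  have ha' : (0 : ℝ) < a := by exact_mod_cast ha
  have hvol : ∀ n : Fin s → ℕ, volume.real (anchoredBox (gridCorner s a n))
      = exp (-((∑ i, n i : ℕ) / (s * a) : ℝ)) := fun n => by
    rw [volume_anchoredBox]
    · simp only [gridCorner]
      rw [← exp_sum, Finset.sum_neg_distrib, ← Finset.sum_div]
      push_cast; rfl
    · exact fun i => (exp_pos _).le
    · exact fun i => exp_le_one_iff.2 (neg_nonpos.2 (by positivity))
  obtain ⟨n, hn, hmax⟩ := Finset.exists_max_image
    {n ∈ simplexGrid s (a ^ 2) | ∀ i, x i ≤ gridCorner s a n i} (fun n => ∑ i, n i)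
    ⟨0, Finset.mem_filter.2 ⟨mem_simplexGrid.2 (by simp), by simpa [gridCorner] using hx1⟩⟩
  simp only [Finset.mem_filter, mem_simplexGrid] at hn hmax
  obtain ⟨hn1, hn2⟩ := hn
  have hU : anchoredBox x ⊆ anchoredBox (gridCorner s a n) := fun y hy i => (hy i).trans (hn2 i)
  have hUmem : anchoredBox (gridCorner s a n) ∈ bracketFamily s a := by
    simp only [bracketFamily, Finset.mem_insert, Finset.mem_union, Finset.mem_image]
    exact Or.inr (Or.inl ⟨n, mem_simplexGrid.2 hn1, rfl⟩)
  rcases hn1.eq_or_lt with heq | hlt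
  · refine ⟨∅, by simp [bracketFamily], _, hUmem, Set.empty_subset _, hU, ?_⟩
    rw [hvol, heq, measureReal_empty, sub_zero, exp_neg, one_div]
    gcongr
    have e : (((s * a ^ 2 : ℕ) : ℝ) / (s * a)) = a := by push_cast; field_simp
    rw [e]
    linarith [add_one_le_exp (a : ℝ)]
  · refine ⟨anchoredBox (gridCorner s a fun i => n i + 1), ?_, _, hUmem, ?_, hU, ?_⟩
    · simp only [bracketFamily, Finset.mem_insert, Finset.mem_union, Finset.mem_image]
      exact Or.inr (Or.inr ⟨n, mem_simplexGrid.2 hn1, rfl⟩)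
    · intro y hy i
      refine (hy i).trans ?_
      by_contra! hlt'
      have hsum : ∑ j, Function.update n i (n i + 1) j = ∑ j, n j + 1 := by
        rw [Finset.sum_update_of_mem (Finset.mem_univ i),
          ← Finset.add_sum_erase _ n (Finset.mem_univ i), Finset.sdiff_singleton_eq_erase]
        ring
      have := hmax (Function.update n i (n i + 1)) ⟨by omega, fun j => ?_⟩
      · omega
      · rcases eq_or_ne j i with rfl | hj
        · simpa [gridCorner] using hlt'.le
        · simpa [gridCorner, hj] using hn2 j
    · rw [hvol, hvol]
      set S : ℝ := ((∑ i, n i : ℕ) : ℝ) / (s * a) with hS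
      have e : (((∑ i, (n i + 1) : ℕ) : ℝ) / (s * a)) = S + 1 / a := by
        rw [hS, Finset.sum_add_distrib]; push_cast; simp; field_simp
      rw [e, neg_add, exp_add]
      have h1 := add_one_le_exp (-(1 / (a : ℝ)))
      have h2 : exp (-S) ≤ 1 := exp_le_one_iff.2 (neg_nonpos.2 (by positivity))
      have h3 := exp_pos (-S)
      have h4 : 0 < 1 / (a : ℝ) := by positivity
      nlinarith

/-! ### Chaining -/

/-- The brackets of width `64 ^ (-k)`; at level `0` the trivial ones, on which every sample has
deviation `0`. -/
noncomputable def levelFamily (s : ℕ) : ℕ → Finset (Set (Cube s))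
  | 0 => by classical exact {∅, Set.univ}
  | k + 1 => bracketFamily s (64 ^ (k + 1))

lemma measurableSet_levelFamily {s k : ℕ} {A : Set (Cube s)} (hA : A ∈ levelFamily s k) :
    MeasurableSet A := by
  cases k with
  | zero =>
    simp only [levelFamily, Finset.mem_insert, Finset.mem_singleton] at hA
    rcases hA with rfl | rfl
    · exact MeasurableSet.empty
    · exact MeasurableSet.univ
  | succ k => exact measurableSet_bracketFamily hA

lemma card_levelFamily_le {s : ℕ} (hs : 1 ≤ s) (k : ℕ) :
    ((levelFamily s k).card : ℝ) ≤ (9 * (2 : ℝ) ^ (12 * k)) ^ s := by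
  cases k with
  | zero =>
    have h1 : (levelFamily s 0).card ≤ 2 := Finset.card_le_two
    have h2 : ((levelFamily s 0).card : ℝ) ≤ 2 := by exact_mod_cast h1
    have h3 : (9 : ℝ) ≤ 9 ^ s := le_self_pow₀ (by norm_num) (by omega)
    norm_num
    linarith
  | succ k =>
    have h1 : 64 ≤ 64 ^ (k + 1) := le_self_pow₀ (by norm_num) (by omega)
    refine (card_bracketFamily_le hs h1).trans_eq ?_
    push_cast
    rw [← pow_mul, show (64 : ℝ) = 2 ^ 6 by norm_num, ← pow_mul]
    ring_nf

lemma exists_level_bracket {s : ℕ} (hs : 1 ≤ s) (k : ℕ) (x : Fin s → ℝ) (hx1 : ∀ i, x i ≤ 1) :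
    ∃ A ∈ levelFamily s k, ∃ B ∈ levelFamily s k, A ⊆ anchoredBox x ∧ anchoredBox x ⊆ B ∧
      volume.real B - volume.real A ≤ 1 / (64 : ℝ) ^ k := by
  cases k with
  | zero =>
    refine ⟨∅, by simp [levelFamily], Set.univ, by simp [levelFamily], Set.empty_subset _,
      Set.subset_univ _, by simp⟩
  | succ k =>
    obtain ⟨A, hA, B, hB, h1, h2, h3⟩ :=
      exists_bracket hs (a := 64 ^ (k + 1)) (Nat.one_le_pow _ _ (by norm_num)) x hx1
    exact ⟨A, hA, B, hB, h1, h2, by push_cast at h3; exact h3⟩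

/-- `N` times the signed local discrepancy of the sample `z` on the set `A`. -/
noncomputable def deviation {s N : ℕ} (z : Fin N → Cube s) (A : Set (Cube s)) : ℝ :=
  ∑ n, A.indicator (1 : Cube s → ℝ) (z n) - N * volume.real A

/-- The tail bound `exp (-17 s (64 / 25) ^ k)` beats the number of pairs of brackets at levels `k`
and `k + 1`. -/
lemma tail_le {s : ℕ} (hs : 1 ≤ s) (k : ℕ) {E : ℝ} (hE : 17 * s * (64 / 25 : ℝ) ^ k ≤ E) :
    (9 * (2 : ℝ) ^ (12 * k)) ^ s * (9 * (2 : ℝ) ^ (12 * (k + 1))) ^ s * (2 * exp (-E))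
      ≤ (1 / 2) ^ (k + 1) := by
  have hb : 1 + (k : ℝ) * (39 / 25) ≤ (64 / 25 : ℝ) ^ k := by
    have := one_add_mul_le_pow (a := (39 / 25 : ℝ)) (by norm_num) k
    norm_num at this ⊢; exact this
  have hs' : (0 : ℝ) < s := by exact_mod_cast hs
  have hE' : s * (17 + k * 26 : ℝ) ≤ E := by
    refine le_trans ?_ hE
    have : (17 + k * 26 : ℝ) ≤ 17 * (64 / 25 : ℝ) ^ k := by
      have : (0 : ℝ) ≤ k := by positivity
      linarith
    nlinarith
  have he : (2.7 : ℝ) ≤ exp 1 := by linarith [Real.exp_one_gt_d9]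
  have h17 : (4 * 81 * 2 ^ 12 : ℝ) ≤ exp 17 := by
    calc (4 * 81 * 2 ^ 12 : ℝ) ≤ 2.7 ^ 17 := by norm_num
      _ ≤ exp 1 ^ 17 := by gcongr
      _ = exp 17 := by rw [← exp_nat_mul]; norm_num
  have h26 : (2 ^ 25 : ℝ) ≤ exp 26 := by
    calc (2 ^ 25 : ℝ) ≤ 2.7 ^ 26 := by norm_num
      _ ≤ exp 1 ^ 26 := by gcongr
      _ = exp 26 := by rw [← exp_nat_mul]; norm_num
  have hexp : ((4 * 81 * 2 ^ 12) * (2 ^ 25) ^ k : ℝ) ^ s ≤ exp E := by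
    calc ((4 * 81 * 2 ^ 12) * (2 ^ 25) ^ k : ℝ) ^ s ≤ (exp 17 * exp 26 ^ k) ^ s := by gcongr
      _ = exp (s * (17 + k * 26 : ℝ)) := by rw [exp_nat_mul, exp_add, exp_nat_mul]
      _ ≤ exp E := exp_le_exp.2 hE'
  have h4 : (2 * 2 ^ (k + 1) : ℝ) ≤ (2 * 2 ^ (k + 1)) ^ s :=
    le_self_pow₀ (by nlinarith [one_le_pow₀ (n := k + 1) (by norm_num : (1 : ℝ) ≤ 2)]) (by omega)
  rw [exp_neg, one_div, inv_pow, ← sub_nonneg]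
  have key : (9 * (2 : ℝ) ^ (12 * k)) ^ s * (9 * (2 : ℝ) ^ (12 * (k + 1))) ^ s
      * (2 * 2 ^ (k + 1)) ≤ exp E := by
    calc (9 * (2 : ℝ) ^ (12 * k)) ^ s * (9 * (2 : ℝ) ^ (12 * (k + 1))) ^ s * (2 * 2 ^ (k + 1))
        ≤ (9 * (2 : ℝ) ^ (12 * k)) ^ s * (9 * (2 : ℝ) ^ (12 * (k + 1))) ^ s
          * (2 * 2 ^ (k + 1)) ^ s := by gcongr
      _ = ((4 * 81 * 2 ^ 12) * (2 ^ 25) ^ k : ℝ) ^ s := by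
          rw [← mul_pow, ← mul_pow, ← pow_mul]; congr 1; ring
      _ ≤ exp E := hexp
  rw [sub_nonneg, ← div_eq_mul_inv, ← mul_div_assoc, div_le_iff₀ (exp_pos _),
    ← div_eq_inv_mul, le_div_iff₀ (by positivity)]
  linarith

/-- A sample whose deviations on consecutive brackets are all small. The threshold
`(16 / 25) ε 5 ^ (-k)` sums up to at most `(4 / 5) ε` over `k`, and `(65 / 64) 64 ^ (-k)` is the
sum of the bracket widths at the levels `k` and `k + 1`. -/
lemma exists_chain_sample {s N K : ℕ} (hs : 1 ≤ s) {ε : ℝ} (h0 : 0 < ε) (h1 : ε ≤ 1)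
    (hN : 169 * (s : ℝ) ≤ N * ε ^ 2) (hK : ∀ k < K, ε * 64 ^ k < 5) :
    ∃ z : Fin N → Cube s, ∀ k < K, ∀ A ∈ levelFamily s k, ∀ B ∈ levelFamily s (k + 1),
      ∫ y, (B.indicator (1 : Cube s → ℝ) y - A.indicator (1 : Cube s → ℝ) y) ^ 2
        ≤ (65 / 64) / 64 ^ k →
      |deviation z B - deviation z A| ≤ N * (16 / 25 * ε / 5 ^ k) := by
  classical
  let v : ℕ → ℝ := fun k => (65 / 64) / 64 ^ k
  let t : ℕ → ℝ := fun k => 16 / 25 * ε / 5 ^ k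
  let f : Set (Cube s) × Set (Cube s) → Cube s → ℝ := fun p y =>
    p.2.indicator (1 : Cube s → ℝ) y - p.1.indicator (1 : Cube s → ℝ) y
  let P : ℕ → Finset (Set (Cube s) × Set (Cube s)) := fun k =>
    {p ∈ levelFamily s k ×ˢ levelFamily s (k + 1) | ∫ y, f p y ^ 2 ≤ v k}
  let J : Finset (Σ _ : ℕ, Set (Cube s) × Set (Cube s)) := (Finset.range K).sigma P
  have hvpos : ∀ k, 0 < v k := fun k => by positivity
  have htpos : ∀ k, 0 < t k := fun k => by positivity
  have hJ : ∀ j ∈ J, j.1 < K ∧ j.2.1 ∈ levelFamily s j.1 ∧ j.2.2 ∈ levelFamily s (j.1 + 1) ∧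
      ∫ y, f j.2 y ^ 2 ≤ v j.1 := fun j hj => by
    simpa [J, P, and_assoc] using hj
  have hl1 : ∀ k < K, t k / (2 * v k) ≤ 1 := fun k hk => by
    rw [div_le_one (by have := hvpos k; positivity)]
    simp only [t, v]
    rw [mul_div_assoc', div_le_div_iff₀ (by positivity) (by positivity)]
    rcases Nat.eq_zero_or_pos k with rfl | hk0
    · norm_num; linarith
    · have h5 : (5 : ℝ) ≤ 5 ^ k := le_self_pow₀ (by norm_num) (by omega)
      have := hK k hk
      nlinarith
  have hexp : ∀ k, N * ((t k / (2 * v k)) ^ 2 * v k - t k / (2 * v k) * t k)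
      = -(N * (t k ^ 2 / (4 * v k))) := fun k => by
    have := (hvpos k).ne'
    field_simp
    ring
  have hE : ∀ k, 17 * s * (64 / 25 : ℝ) ^ k ≤ N * (t k ^ 2 / (4 * v k)) := fun k => by
    have e : N * (t k ^ 2 / (4 * v k)) = N * ε ^ 2 * (4096 / 40625) * (64 / 25 : ℝ) ^ k := by
      simp only [t, v]
      rw [div_pow (64 : ℝ), show (25 : ℝ) = 5 ^ 2 by norm_num, ← pow_mul, mul_comm 2 k, pow_mul]
      field_simp
      ring
    rw [e]
    refine mul_le_mul_of_nonneg_right ?_ (by positivity)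
    have : (0 : ℝ) ≤ s := by positivity
    nlinarith
  obtain ⟨z, hz⟩ := exists_sample (volume : Measure (Cube s)) N J (fun j => f j.2)
    (fun j => t j.1 / (2 * v j.1)) (fun j => t j.1) (fun j => v j.1)
    (fun j hj => by
      obtain ⟨-, hA, hB, -⟩ := hJ j hj
      exact (measurable_one.indicator (measurableSet_levelFamily hB)).sub
        (measurable_one.indicator (measurableSet_levelFamily hA)))
    (fun j _ y => by
      simp only [f, Set.indicator_apply, Pi.one_apply]
      split_ifs <;> norm_num)
    (fun j hj => (hJ j hj).2.2.2)
    (fun j _ => div_pos (htpos _) (mul_pos two_pos (hvpos _)))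
    (fun j hj => hl1 _ (hJ j hj).1)
    (by
      rw [Finset.sum_sigma]
      calc ∑ k ∈ Finset.range K, ∑ _p ∈ P k,
            2 * exp (N * ((t k / (2 * v k)) ^ 2 * v k - t k / (2 * v k) * t k))
          ≤ ∑ k ∈ Finset.range K, (1 / 2 : ℝ) ^ (k + 1) := by
            refine Finset.sum_le_sum fun k _ => ?_
            rw [Finset.sum_const, nsmul_eq_mul, hexp]
            refine le_trans ?_ (tail_le hs k (hE k))
            gcongr
            have hc : (P k).card ≤ (levelFamily s k).card * (levelFamily s (k + 1)).card :=
              (Finset.card_filter_le _ _).trans_eq (Finset.card_product _ _)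
            calc ((P k).card : ℝ) ≤ (levelFamily s k).card * (levelFamily s (k + 1)).card := by
                  exact_mod_cast hc
              _ ≤ _ := by
                  gcongr
                  · exact card_levelFamily_le hs k
                  · exact card_levelFamily_le hs (k + 1)
        _ = 1 - (1 / 2 : ℝ) ^ K := by
            simp_rw [pow_succ]
            rw [← Finset.sum_mul, geom_sum_eq (by norm_num)]
            ring
        _ < 1 := by linarith [pow_pos (by norm_num : (0 : ℝ) < 1 / 2) K])
  refine ⟨z, fun k hk A hA B hB hAB => ?_⟩
  have h := hz ⟨k, (A, B)⟩ (by simp [J, P, hk, hA, hB]; exact hAB)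
  have hmA := measurableSet_levelFamily hA
  have hmB := measurableSet_levelFamily hB
  have hint : ∀ C : Set (Cube s), MeasurableSet C →
      Integrable (C.indicator (1 : Cube s → ℝ)) volume := fun C hC =>
    (integrable_const (1 : ℝ)).indicator hC
  simp only [f] at h
  rw [integral_sub (hint B hmB) (hint A hmA), integral_indicator_one hmB,
    integral_indicator_one hmA, Finset.sum_sub_distrib] at h
  simp only [t] at h
  convert h using 2
  simp only [deviation]
  ring

/-- A link of a chain, from the lower bracket `A` of `E` at one level to a set `C` between the
brackets `A'`, `B'` of `E` at the next, is controlled by the two bracket widths. -/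
lemma sq_indicator_sub_le {X : Type*} {A B A' B' C E : Set X} (hAE : A ⊆ E) (hEB : E ⊆ B)
    (hAE' : A' ⊆ E) (hEB' : E ⊆ B') (hAC : A' ⊆ C) (hCB : C ⊆ B') (y : X) :
    (C.indicator (1 : X → ℝ) y - A.indicator (1 : X → ℝ) y) ^ 2
      ≤ (B.indicator (1 : X → ℝ) y - A.indicator (1 : X → ℝ) y)
        + (B'.indicator (1 : X → ℝ) y - A'.indicator (1 : X → ℝ) y) := by
  by_cases hE : y ∈ E
  · have hB := hEB hE
    have hB' := hEB' hE
    by_cases hC : y ∈ C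
    · by_cases hA : y ∈ A <;> by_cases hA' : y ∈ A' <;> simp [hA, hA', hB, hB', hC]
    · have hA' : y ∉ A' := fun h => hC (hAC h)
      by_cases hA : y ∈ A <;> simp [hA, hA', hB, hB', hC]
  · have hA : y ∉ A := fun h => hE (hAE h)
    have hA' : y ∉ A' := fun h => hE (hAE' h)
    by_cases hC : y ∈ C
    · have hB' := hCB hC
      by_cases hB : y ∈ B <;> simp [hA, hA', hB, hB', hC]
    · by_cases hB : y ∈ B <;> by_cases hB' : y ∈ B' <;> simp [hA, hA', hB, hB', hC]

/-- Telescoping along the lower brackets of `x` at levels `0, …, K`, with the upper bracket allowed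
as the last link of the chain. -/
lemma deviation_le_of_chain {s N K : ℕ} {ε : ℝ} (hs : 1 ≤ s) {z : Fin N → Cube s}
    (hz : ∀ k < K, ∀ A ∈ levelFamily s k, ∀ B ∈ levelFamily s (k + 1),
      ∫ y, (B.indicator (1 : Cube s → ℝ) y - A.indicator (1 : Cube s → ℝ) y) ^ 2
        ≤ (65 / 64) / 64 ^ k →
      |deviation z B - deviation z A| ≤ N * (16 / 25 * ε / 5 ^ k))
    (x : Fin s → ℝ) (hx1 : ∀ i, x i ≤ 1) :
    ∃ A B : Set (Cube s), A ⊆ anchoredBox x ∧ anchoredBox x ⊆ B ∧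
      volume.real B - volume.real A ≤ 1 / (64 : ℝ) ^ K ∧
      |deviation z A| ≤ N * (4 / 5 * ε * (1 - 1 / 5 ^ K)) ∧
      |deviation z B| ≤ N * (4 / 5 * ε * (1 - 1 / 5 ^ K)) := by
  classical
  choose A hA B hB hAx hxB hw using fun k => exists_level_bracket hs k x hx1
  have hd0 : ∀ C ∈ levelFamily s 0, deviation z C = 0 := fun C hC => by
    simp only [levelFamily, Finset.mem_insert, Finset.mem_singleton] at hC
    rcases hC with rfl | rfl <;> simp [deviation]
  have hint : ∀ C : Set (Cube s), MeasurableSet C →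
      Integrable (C.indicator (1 : Cube s → ℝ)) volume := fun C hC =>
    (integrable_const (1 : ℝ)).indicator hC
  have hsq : ∀ k, ∀ C ∈ levelFamily s (k + 1), A (k + 1) ⊆ C → C ⊆ B (k + 1) →
      ∫ y, (C.indicator (1 : Cube s → ℝ) y - (A k).indicator (1 : Cube s → ℝ) y) ^ 2
        ≤ (65 / 64) / 64 ^ k := by
    intro k C hC hAC hCB
    have mA := measurableSet_levelFamily (hA k)
    have mB := measurableSet_levelFamily (hB k)
    have mA' := measurableSet_levelFamily (hA (k + 1))
    have mB' := measurableSet_levelFamily (hB (k + 1))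
    have mC := measurableSet_levelFamily hC
    calc ∫ y, (C.indicator (1 : Cube s → ℝ) y - (A k).indicator (1 : Cube s → ℝ) y) ^ 2
        ≤ ∫ y, (((B k).indicator (1 : Cube s → ℝ) y - (A k).indicator (1 : Cube s → ℝ) y)
          + ((B (k + 1)).indicator (1 : Cube s → ℝ) y
            - (A (k + 1)).indicator (1 : Cube s → ℝ) y)) := by
          refine integral_mono_of_nonneg (ae_of_all _ fun y => sq_nonneg _)
            (((hint _ mB).sub (hint _ mA)).add ((hint _ mB').sub (hint _ mA')))
            (ae_of_all _ fun y => ?_)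
          exact sq_indicator_sub_le (hAx k) (hxB k) (hAx (k + 1)) (hxB (k + 1)) hAC hCB y
      _ = (volume.real (B k) - volume.real (A k))
          + (volume.real (B (k + 1)) - volume.real (A (k + 1))) := by
          refine (integral_add ((hint _ mB).sub (hint _ mA))
            ((hint _ mB').sub (hint _ mA'))).trans ?_
          simp only [Pi.sub_apply]
          rw [integral_sub (hint _ mB) (hint _ mA), integral_sub (hint _ mB') (hint _ mA'),
            integral_indicator_one mA, integral_indicator_one mB, integral_indicator_one mA',
            integral_indicator_one mB']
      _ ≤ 1 / 64 ^ k + 1 / 64 ^ (k + 1) := add_le_add (hw k) (hw (k + 1))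
      _ = (65 / 64) / 64 ^ k := by rw [pow_succ]; field_simp; norm_num
  have main : ∀ k ≤ K, |deviation z (A k)| ≤ N * (4 / 5 * ε * (1 - 1 / 5 ^ k)) ∧
      |deviation z (B k)| ≤ N * (4 / 5 * ε * (1 - 1 / 5 ^ k)) := by
    intro k
    induction k with
    | zero => intro _; simp [hd0 _ (hA 0), hd0 _ (hB 0)]
    | succ k ih =>
      intro hk
      have ih' := (ih (by omega)).1
      have hstep : ∀ C ∈ levelFamily s (k + 1), A (k + 1) ⊆ C → C ⊆ B (k + 1) →
          |deviation z C| ≤ N * (4 / 5 * ε * (1 - 1 / 5 ^ (k + 1))) := by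
        intro C hC h1 h2
        have h3 := hz k (by omega) _ (hA k) C hC (hsq k C hC h1 h2)
        have h4 : |deviation z C| ≤ |deviation z C - deviation z (A k)| + |deviation z (A k)| := by
          simpa using abs_add_le (deviation z C - deviation z (A k)) (deviation z (A k))
        have h5 : N * (16 / 25 * ε / 5 ^ k) + N * (4 / 5 * ε * (1 - 1 / 5 ^ k))
            = N * (4 / 5 * ε * (1 - 1 / 5 ^ (k + 1))) := by
          rw [pow_succ]; field_simp; ring
        linarith
      have hAB := (hAx (k + 1)).trans (hxB (k + 1))
      exact ⟨hstep _ (hA _) subset_rfl hAB, hstep _ (hB _) hAB subset_rfl⟩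
  exact ⟨A K, B K, hAx K, hxB K, hw K, (main K le_rfl).1, (main K le_rfl).2⟩

theorem stmt_3 (s : ℕ) (hs : 1 ≤ s) (ε : ℝ) (hε : ε ∈ Set.Ioc (0:ℝ) 1) :
    ∃ N : ℕ, 1 ≤ N ∧ (N : ℝ) ≤ ⌈169 * (s : ℝ) * ε⁻¹ ^ 2⌉ ∧
      ∃ z : Fin N → (Fin s → ℝ), (∀ n, z n ∈ Set.Icc (0 : Fin s → ℝ) 1) ∧
        starDiscrepancy s N z ≤ ε := by
  classical
  obtain ⟨h0, h1⟩ := hε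
  have hs' : (0 : ℝ) < s := by exact_mod_cast hs
  have hq : 0 < 169 * (s : ℝ) * ε⁻¹ ^ 2 := by positivity
  set N : ℕ := ⌈169 * (s : ℝ) * ε⁻¹ ^ 2⌉₊ with hNdef
  have hN1 : 1 ≤ N := Nat.ceil_pos.2 hq
  have hN0 : (0 : ℝ) < N := by exact_mod_cast hN1
  have hN : 169 * (s : ℝ) ≤ N * ε ^ 2 := by
    have := Nat.le_ceil (169 * (s : ℝ) * ε⁻¹ ^ 2)
    rw [← hNdef, inv_pow, ← div_eq_mul_inv, div_le_iff₀ (by positivity)] at this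
    exact this
  -- The last level `K` is the first one at which the brackets have width at most `ε / 5`.
  have hex : ∃ K : ℕ, 5 ≤ ε * 64 ^ K := by
    obtain ⟨K, hK⟩ := pow_unbounded_of_one_lt (5 / ε) (by norm_num : (1 : ℝ) < 64)
    exact ⟨K, by rw [div_lt_iff₀ h0] at hK; linarith⟩
  obtain ⟨K, hK5, hKlt⟩ : ∃ K : ℕ, 5 ≤ ε * 64 ^ K ∧ ∀ k < K, ε * 64 ^ k < 5 :=
    ⟨Nat.find hex, Nat.find_spec hex, fun k hk => not_le.1 (Nat.find_min hex hk)⟩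
  obtain ⟨z, hz⟩ := exists_chain_sample hs h0 h1 hN hKlt
  refine ⟨N, hN1, ?_, fun n i => z n i, fun n => ⟨fun i => (z n i).2.1, fun i => (z n i).2.2⟩, ?_⟩
  · rw [hNdef, ← Int.natCast_ceil_eq_ceil hq.le]
    simp
  unfold starDiscrepancy
  have : Nonempty (Set.Icc (0 : Fin s → ℝ) 1) := ⟨⟨0, le_rfl, zero_le_one⟩⟩
  refine ciSup_le fun ⟨x, hx0, hx1⟩ => ?_
  obtain ⟨A, B, hAx, hxB, hw, hA, hB⟩ := deviation_le_of_chain hs hz x hx1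
  have hcard : (Nat.card {n : Fin N // (fun i => (z n i : ℝ)) ∈ Set.Icc 0 x} : ℝ)
      = ∑ n, (anchoredBox x).indicator (1 : Cube s → ℝ) (z n) := by
    rw [Nat.card_eq_fintype_card, Fintype.card_subtype, Finset.card_filter]
    push_cast
    refine Finset.sum_congr rfl fun n _ => ?_
    rw [Set.indicator_apply]
    refine if_congr ?_ rfl rfl
    exact ⟨fun h i => h.2 i, fun h => ⟨fun i => (z n i).2.1, h⟩⟩
  have hvol := volume_anchoredBox (c := x) hx0 hx1
  simp only
  rw [hcard, ← hvol]
  have m1 : ∑ n, A.indicator (1 : Cube s → ℝ) (z n)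
      ≤ ∑ n, (anchoredBox x).indicator (1 : Cube s → ℝ) (z n) :=
    Finset.sum_le_sum fun n _ => Set.indicator_le_indicator_of_subset hAx (fun _ => zero_le_one) _
  have m2 : ∑ n, (anchoredBox x).indicator (1 : Cube s → ℝ) (z n)
      ≤ ∑ n, B.indicator (1 : Cube s → ℝ) (z n) :=
    Finset.sum_le_sum fun n _ => Set.indicator_le_indicator_of_subset hxB (fun _ => zero_le_one) _
  have v1 : volume.real A ≤ volume.real (anchoredBox x) := measureReal_mono hAx
  have v2 : volume.real (anchoredBox x) ≤ volume.real B := measureReal_mono hxB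
  have hw' : volume.real B - volume.real A ≤ ε / 5 := by
    refine hw.trans ?_
    rw [div_le_div_iff₀ (by positivity) (by norm_num)]
    linarith
  have ht : N * (4 / 5 * ε * (1 - 1 / 5 ^ K)) ≤ N * (4 / 5 * ε) := by
    refine mul_le_mul_of_nonneg_left (mul_le_of_le_one_right (by positivity) ?_) hN0.le
    have : (0 : ℝ) < 1 / 5 ^ K := by positivity
    linarith
  have hA' := abs_le.1 (hA.trans ht)
  have hB' := abs_le.1 (hB.trans ht)
  simp only [deviation] at hA' hB'
  rw [abs_le]
  constructor
  · rw [le_sub_iff_add_le, le_div_iff₀ hN0]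
    nlinarith
  · rw [sub_le_iff_le_add, div_le_iff₀ hN0]
    nlinarith
end
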